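/- arXiv:0806.0786 — 3 statements merged into one kernel-verified Lean document; each statement's English description precedes it below -/
import Mathlib

section
/- Assume the Riemann Hypothesis. Let α be a complex number with |α| ≤ 1 and |Re α − 1/2| ≤ (log T)^{-1}, let k > 0 be a real number, and let ε > 0 be arbitrary. Then for all sufficiently large T the inequality (1/N(T)) · Σ_{0 < γ ≤ T} |ζ(ρ + α)|^{2k} ≪_{k,ε} (log T)^{k²+ε} holds uniformly in α, where the sum runs over the non-trivial zeros ρ = 1/2 + iγ of ζ(s). -/
/-!
Since `Re (ρ + α) = 1 + O(1 / log T)`, the shifted zeros lie next to the line `Re s = 1`, where RH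
gives `ζ(s) ≪ (log T)^δ` for every `δ > 0`. With `δ = min ((k² + ε) / (2k)) 1` the moment bound
holds for every single term of the sum, and no averaging over the zeros is needed.

The pointwise bound (`zeta_le_rpow_of_RH`) is a weak form of Littlewood's estimate. Around
`c = 2 + it` choose a branch `G` of `log (ζ / ζ(c))` on the disc of radius `3/2`, which is free of
zeros under RH. With `L = log T`, the Borel–Carathéodory theorem gives `G = O(1)` on the disc of
radius `1 - h`, where `ζ` is bounded, and `G = O(L)` on the disc of radius `3/2 - h`, where `ζ` has
polynomial growth. Hadamard's three circles theorem (`three_circles`) interpolates this to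
`G = O(L^δ)` on the disc of radius `1 + h` once `h` is small (`log_growth`). Hence, by the Schwarz
lemma, `log |ζ|` varies only by `O(1)` over the horizontal distance `O(L^{-δ})`, and at
`s₁ = 1 + L^{-δ} + it` the trivial bound is `|ζ(s₁)| ≤ 2 L^δ`.

The estimates for `ζ` come from `ζ(s) = s/(s-1) - s ∫_1^∞ {t} t^{-s-1} dt`. The same formula shows
that there are no zeros up to height `9/10` (`zeta_ne_zero_of_low`); as `|Im α| ≤ 7/8` for large
`T`, the points `ρ + α` keep a fixed distance from the pole at `1`, which makes the bound uniform
in `α`.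
-/

open Complex

/-- The set of non-trivial zeros `ρ = β + iγ` of the Riemann zeta-function
with ordinate `0 < γ ≤ T`. -/
noncomputable def nontrivialZeros (T : ℝ) : Set ℂ :=
  {ρ | riemannZeta ρ = 0 ∧ 0 < ρ.re ∧ ρ.re < 1 ∧ 0 < ρ.im ∧ ρ.im ≤ T}


/-! ### Logarithms and the three circles theorem -/

/-- A zero-free holomorphic function on a disc has a logarithm: integrate `f' / f`. -/
lemma exists_log_on_ball {f : ℂ → ℂ} {R : ℝ} (hR : 0 < R)
    (hf : DifferentiableOn ℂ f (Metric.ball 0 R)) (hf0 : ∀ z ∈ Metric.ball (0 : ℂ) R, f z ≠ 0) :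
    ∃ G : ℂ → ℂ, DifferentiableOn ℂ G (Metric.ball 0 R) ∧ G 0 = 0 ∧
      ∀ z ∈ Metric.ball (0 : ℂ) R, f z = f 0 * exp (G z) := by
  have hderiv : DifferentiableOn ℂ (deriv f) (Metric.ball 0 R) := hf.deriv Metric.isOpen_ball
  obtain ⟨g, hg⟩ := (hderiv.div hf hf0).isExactOn_ball
  have h0 : (0 : ℂ) ∈ Metric.ball (0 : ℂ) R := Metric.mem_ball_self hR
  have hH : ∀ z ∈ Metric.ball (0 : ℂ) R, HasDerivAt (fun w ↦ f w * exp (-g w)) 0 z := by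
    intro z hz
    have h1 := (hf.differentiableAt (Metric.isOpen_ball.mem_nhds hz)).hasDerivAt
    have h2 := (hg z hz).neg.cexp
    convert! h1.mul h2 using 1
    simp only [Pi.div_apply, Pi.neg_apply]
    field_simp [hf0 z hz]
    ring
  have hconst : ∀ z ∈ Metric.ball (0 : ℂ) R, f z * exp (-g z) = f 0 * exp (-g 0) := by
    intro z hz
    refine Metric.isOpen_ball.is_const_of_deriv_eq_zero (f := fun w ↦ f w * exp (-g w))
      Metric.isPreconnected_ball
      (fun w hw ↦ (hH w hw).differentiableAt.differentiableWithinAt)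
      (fun w hw ↦ (hH w hw).deriv) hz h0
  refine ⟨fun z ↦ g z - g 0, fun z hz ↦
    ((hg z hz).differentiableAt.sub_const _).differentiableWithinAt, by simp, fun z hz ↦ ?_⟩
  calc f z = f z * exp (-g z) * exp (g z) := by
        rw [mul_assoc, ← exp_add]; simp
    _ = f 0 * exp (g z - g 0) := by
        rw [hconst z hz, mul_assoc, ← exp_add]; ring_nf

/-- Hadamard's three circles theorem in a weakened form, obtained from the three lines theorem
for `G ∘ exp`. -/
lemma three_circles {G : ℂ → ℂ} {r₁ r₂ r₃ R A B : ℝ} (h0 : 0 < r₁) (h12 : r₁ < r₂)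
    (h23 : r₂ < r₃) (h3R : r₃ < R) (hG : DifferentiableOn ℂ G (Metric.ball 0 R))
    (hA : ∀ z, ‖z‖ ≤ r₁ → ‖G z‖ ≤ A) (hB : ∀ z, ‖z‖ ≤ r₃ → ‖G z‖ ≤ B)
    (hA1 : 1 ≤ A) (hB1 : 1 ≤ B) {z : ℂ} (hz : ‖z‖ ≤ r₂) :
    ‖G z‖ ≤ A * B ^ (Real.log (r₂ / r₁) / Real.log (r₃ / r₁)) := by
  have hr3 : 0 < Real.log (r₃ / r₁) := Real.log_pos (by rw [one_lt_div h0]; linarith)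
  have hr2 : 0 < Real.log (r₂ / r₁) := Real.log_pos (by rw [one_lt_div h0]; linarith)
  rcases le_or_gt ‖z‖ r₁ with h | h
  · exact (hA z h).trans (le_mul_of_one_le_right (by linarith)
      (Real.one_le_rpow hB1 (by positivity)))
  have hz0 : z ≠ 0 := by
    rintro rfl
    simp at h; linarith
  have hexp : ∀ w : ℂ, w.re ≤ Real.log r₃ → ‖exp w‖ ≤ r₃ := by
    intro w hw
    rw [norm_exp]
    calc Real.exp w.re ≤ Real.exp (Real.log r₃) := by gcongr
      _ = r₃ := Real.exp_log (by linarith)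
  have hd : DifferentiableOn ℂ (fun w ↦ G (exp w)) {w | w.re ≤ Real.log r₃} := by
    intro w hw
    have := hexp w hw
    have h1 : DifferentiableAt ℂ G (exp w) :=
      hG.differentiableAt (Metric.isOpen_ball.mem_nhds (by simp; linarith))
    exact (DifferentiableAt.comp (f := exp) (g := G) w h1
      differentiable_exp.differentiableAt).differentiableWithinAt
  have hlog : Real.log r₁ < Real.log r₃ := Real.log_lt_log h0 (by linarith)
  have hl3 : Real.log r₃ - Real.log r₁ = Real.log (r₃ / r₁) := by
    rw [Real.log_div (by linarith) (by linarith)]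
  have hl2 : Real.log r₂ - Real.log r₁ = Real.log (r₂ / r₁) := by
    rw [Real.log_div (by linarith) (by linarith)]
  have hre : (log z).re = Real.log ‖z‖ := log_re z
  have hz1 : Real.log r₁ ≤ Real.log ‖z‖ := Real.log_le_log h0 h.le
  have hz2 : Real.log ‖z‖ ≤ Real.log r₂ := Real.log_le_log (by linarith) hz
  have hz3 : Real.log r₂ ≤ Real.log r₃ := Real.log_le_log (by linarith) h23.le
  have key := HadamardThreeLines.norm_le_interp_of_mem_verticalClosedStrip'
    (f := fun w ↦ G (exp w)) (z := log z) (a := A) (b := B) hlog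
    (by
      simp only [HadamardThreeLines.verticalClosedStrip, Set.mem_preimage, hre, Set.mem_Icc]
      exact ⟨hz1, hz2.trans hz3⟩)
    (by
      apply DifferentiableOn.diffContOnCl
      apply hd.mono
      rw [HadamardThreeLines.verticalStrip, closure_preimage_re, closure_Ioo hlog.ne]
      exact fun w hw ↦ hw.2)
    (by
      refine ⟨B, ?_⟩
      rintro _ ⟨w, hw, rfl⟩
      exact hB _ (hexp w hw.2))
    (by
      intro w hw
      apply hA
      rw [norm_exp, show w.re = Real.log r₁ from hw, Real.exp_log h0])
    (by
      intro w hw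
      exact hB _ (hexp w (le_of_eq hw)))
  simp only [exp_log hz0, hre, hl3] at key
  set x := (Real.log ‖z‖ - Real.log r₁) / Real.log (r₃ / r₁) with hx
  have hx0 : 0 ≤ x := div_nonneg (by linarith) hr3.le
  have hxa : x ≤ Real.log (r₂ / r₁) / Real.log (r₃ / r₁) := by
    rw [hx]; gcongr; linarith
  refine key.trans ?_
  have h1 : A ^ (1 - x) ≤ A := by
    calc A ^ (1 - x) ≤ A ^ (1 : ℝ) := Real.rpow_le_rpow_of_exponent_le hA1 (by linarith)
      _ = A := Real.rpow_one A
  have h2 := Real.rpow_le_rpow_of_exponent_le hB1 hxa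
  exact mul_le_mul h1 h2 (by positivity) (by linarith)

open Filter Topology in
/-- The exponent that `three_circles` yields for the radii `1 - h < 1 + h < 3/2 - h` tends to `0`
as `h → 0`. -/
lemma exists_small_exponent {δ : ℝ} (hδ : 0 < δ) :
    ∃ h : ℝ, 0 < h ∧ h < 1 / 8 ∧
      Real.log ((1 + h) / (1 - h)) / Real.log ((3 / 2 - h) / (1 - h)) ≤ δ := by
  have hc : ContinuousAt (fun h : ℝ ↦
      Real.log ((1 + h) / (1 - h)) / Real.log ((3 / 2 - h) / (1 - h))) 0 := by
    have hpos : (0 : ℝ) < Real.log (3 / 2) := Real.log_pos (by norm_num)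
    have h1 : ContinuousAt (fun h : ℝ ↦ (1 + h) / (1 - h)) 0 :=
      ContinuousAt.div (by fun_prop) (by fun_prop) (by norm_num)
    have h2 : ContinuousAt (fun h : ℝ ↦ (3 / 2 - h) / (1 - h)) 0 :=
      ContinuousAt.div (by fun_prop) (by fun_prop) (by norm_num)
    refine ContinuousAt.div (h1.log (by norm_num)) (h2.log (by norm_num)) ?_
    norm_num
  have h1 : ∀ᶠ h in 𝓝[>] (0 : ℝ),
      Real.log ((1 + h) / (1 - h)) / Real.log ((3 / 2 - h) / (1 - h)) < δ := by
    refine nhdsWithin_le_nhds (hc.eventually_lt continuousAt_const ?_)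
    simpa using hδ
  have h2 : ∀ᶠ h in 𝓝[>] (0 : ℝ), h < 1 / 8 :=
    nhdsWithin_le_nhds (gt_mem_nhds (by norm_num))
  obtain ⟨h, ⟨ha, hb⟩, hc⟩ := ((h1.and h2).and self_mem_nhdsWithin).exists
  exact ⟨h, hc, hb, ha.le⟩

/-- A bound for `log (f / f 0)` on a disc of radius `1 + h`, slightly larger than the disc on which
`f` is bounded by a constant `Z`, at the cost of only `L ^ δ` when `f` is as large as `exp (5 L)` on
the disc of radius `3/2`. Applied to `f z = ζ(2 + it + z)`. -/
lemma log_growth {δ : ℝ} (hδ : 0 < δ) :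
    ∃ h : ℝ, 0 < h ∧ h < 1 / 8 ∧ ∀ Z : ℝ, 1 ≤ Z → ∃ D : ℝ, 0 < D ∧ ∀ L : ℝ, 1 ≤ L → ∀ f : ℂ → ℂ,
      DifferentiableOn ℂ f (Metric.ball 0 (3 / 2)) →
      (∀ z ∈ Metric.ball (0 : ℂ) (3 / 2), f z ≠ 0) → 1 / 3 ≤ ‖f 0‖ →
      (∀ z : ℂ, ‖z‖ < 1 - h / 2 → ‖f z‖ ≤ Z) →
      (∀ z : ℂ, ‖z‖ < 3 / 2 → ‖f z‖ ≤ Real.exp (5 * L)) →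
      ∃ G : ℂ → ℂ, DifferentiableOn ℂ G (Metric.ball 0 (3 / 2)) ∧
        (∀ z ∈ Metric.ball (0 : ℂ) (3 / 2), f z = f 0 * exp (G z)) ∧
        ∀ z : ℂ, ‖z‖ ≤ 1 + h → ‖G z‖ ≤ D * L ^ δ := by
  obtain ⟨h, hh0, hh8, hexp⟩ := exists_small_exponent hδ
  refine ⟨h, hh0, hh8, fun Z hZ ↦ ?_⟩
  have hlog3 : 0 < Real.log 3 := Real.log_pos (by norm_num)
  have hlog3' : Real.log 3 ≤ 2 := by
    have := Real.log_le_sub_one_of_pos (show (0 : ℝ) < 3 by norm_num)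
    linarith
  have hlogZ : 0 ≤ Real.log Z := Real.log_nonneg hZ
  set M := Real.log 3 + Real.log Z with hM
  have hM0 : 0 < M := by positivity
  set A := 4 * M / h + 1 with hA
  have hA1 : 1 ≤ A := by
    have : 0 ≤ 4 * M / h := by positivity
    linarith
  refine ⟨A * (42 / h) ^ δ, by positivity, fun L hL f hf hf0 hf1 hfZ hfX ↦ ?_⟩
  obtain ⟨G, hG, hG0, hfG⟩ := exists_log_on_ball (by norm_num) hf hf0
  refine ⟨G, hG, hfG, fun z hz ↦ ?_⟩
  -- an upper bound for `|f|` is an upper bound for `Re G`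
  have hre : ∀ z : ℂ, ‖z‖ < 3 / 2 → ∀ Y : ℝ, 0 < Y → ‖f z‖ ≤ Y →
      (G z).re ≤ Real.log 3 + Real.log Y := by
    intro z hz Y hY hfz
    rw [hfG z (by simpa using hz), norm_mul, norm_exp] at hfz
    rw [← Real.log_mul (by norm_num) hY.ne', Real.le_log_iff_exp_le (by positivity)]
    nlinarith [Real.exp_pos (G z).re]
  have hsmall : ∀ z : ℂ, ‖z‖ ≤ 1 - h → ‖G z‖ ≤ A := by
    intro z hz
    have := borelCaratheodory_zero (f := G) (R := 1 - h / 2) hM0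
      (hG.mono (Metric.ball_subset_ball (by linarith)))
      (fun w hw ↦ by
        have hw' : ‖w‖ < 1 - h / 2 := by simpa using hw
        exact hre w (by linarith) Z (by linarith) (hfZ w hw'))
      (by linarith) (z := z) (by simp; linarith) hG0
    refine this.trans ?_
    calc 2 * M * ‖z‖ / (1 - h / 2 - ‖z‖) ≤ 2 * M * 1 / (h / 2) := by
          gcongr <;> linarith
      _ = 4 * M / h := by field_simp; ring
      _ ≤ A := by linarith
  have hbig : ∀ z : ℂ, ‖z‖ ≤ 3 / 2 - h → ‖G z‖ ≤ 42 / h * L := by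
    intro z hz
    have := borelCaratheodory_zero (f := G) (R := 3 / 2) (M := 7 * L) (by linarith) hG
      (fun w hw ↦ by
        have hw' : ‖w‖ < 3 / 2 := by simpa using hw
        have := hre w hw' _ (Real.exp_pos _) (hfX w hw')
        rw [Real.log_exp] at this
        show (G w).re ≤ _
        linarith)
      (by linarith) (z := z) (by simp; linarith) hG0
    refine this.trans ?_
    calc 2 * (7 * L) * ‖z‖ / (3 / 2 - ‖z‖) ≤ 2 * (7 * L) * 3 / h := by
          gcongr <;> linarith
      _ = 42 / h * L := by field_simp; ring
  have hB1 : 1 ≤ 42 / h * L := by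
    have : 1 ≤ 42 / h := by rw [le_div_iff₀ hh0]; linarith
    nlinarith
  calc ‖G z‖ ≤ A * (42 / h * L) ^ _ :=
        three_circles (r₁ := 1 - h) (r₂ := 1 + h) (r₃ := 3 / 2 - h) (by linarith) (by linarith)
          (by linarith) (by linarith) hG hsmall hbig hA1 hB1 hz
    _ ≤ A * (42 / h * L) ^ δ := by
        gcongr
    _ = A * (42 / h) ^ δ * L ^ δ := by
        rw [Real.mul_rpow (by positivity) (by positivity), mul_assoc]

/-! ### Estimates for `ζ` from its integral representation -/

/-- The function `J(s) = ∫_1^∞ {t} t^{-s-1} dt`, which continues `ζ` to `Re s > 0` through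
`ζ(s) = s/(s-1) - s J(s)`. -/
noncomputable def fractIntegral (s : ℂ) : ℂ :=
  ∫ t in Set.Ioi (1 : ℝ), ((Int.fract t : ℝ) : ℂ) * (t : ℂ) ^ (-(s + 1))

open MeasureTheory Set Asymptotics Filter Topology

lemma norm_fract_mul_cpow {t : ℝ} (ht : 0 < t) (s : ℂ) :
    ‖((Int.fract t : ℝ) : ℂ) * (t : ℂ) ^ (-(s + 1))‖ = Int.fract t * t ^ (-(s.re + 1)) := by
  rw [norm_mul, norm_cpow_eq_rpow_re_of_pos ht, Complex.norm_real, Real.norm_eq_abs,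
    abs_of_nonneg (Int.fract_nonneg t)]
  simp

lemma integrableOn_fract_mul_rpow {σ : ℝ} (hσ : 0 < σ) :
    IntegrableOn (fun t : ℝ ↦ Int.fract t * t ^ (-(σ + 1))) (Ioi 1) := by
  have h := integrableOn_Ioi_rpow_of_lt (a := -(σ + 1)) (by linarith) (zero_lt_one)
  refine Integrable.mono' h (by
    apply Measurable.aestronglyMeasurable
    fun_prop) ?_
  refine (ae_restrict_iff' measurableSet_Ioi).mpr (.of_forall fun t ht ↦ ?_)
  have ht0 : (0 : ℝ) < t := lt_trans one_pos ht
  have := Real.rpow_nonneg ht0.le (-(σ + 1))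
  rw [Real.norm_eq_abs, abs_of_nonneg (mul_nonneg (Int.fract_nonneg t) this)]
  exact mul_le_of_le_one_left this (Int.fract_lt_one t).le

lemma integrableOn_fract_mul_cpow {s : ℂ} (hs : 0 < s.re) :
    IntegrableOn (fun t : ℝ ↦ ((Int.fract t : ℝ) : ℂ) * (t : ℂ) ^ (-(s + 1))) (Ioi 1) := by
  refine Integrable.mono' (integrableOn_fract_mul_rpow hs) (by
    apply Measurable.aestronglyMeasurable
    fun_prop) ?_
  refine (ae_restrict_iff' measurableSet_Ioi).mpr (.of_forall fun t ht ↦ ?_)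
  exact (norm_fract_mul_cpow (lt_trans one_pos ht) s).le

lemma norm_fractIntegral_le (s : ℂ) :
    ‖fractIntegral s‖ ≤ ∫ t in Ioi (1 : ℝ), Int.fract t * t ^ (-(s.re + 1)) := by
  refine (norm_integral_le_integral_norm _).trans_eq ?_
  exact setIntegral_congr_fun measurableSet_Ioi
    fun t ht ↦ norm_fract_mul_cpow (lt_trans one_pos ht) s

lemma norm_fractIntegral_le_inv {s : ℂ} (hs : 0 < s.re) : ‖fractIntegral s‖ ≤ 1 / s.re := by
  refine (norm_fractIntegral_le s).trans ?_
  have h := integral_Ioi_rpow_of_lt (a := -(s.re + 1)) (by linarith) (zero_lt_one)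
  calc _ ≤ ∫ t in Ioi (1 : ℝ), t ^ (-(s.re + 1)) := by
        refine setIntegral_mono_on (integrableOn_fract_mul_rpow hs)
          (integrableOn_Ioi_rpow_of_lt (by linarith) zero_lt_one) measurableSet_Ioi fun t ht ↦ ?_
        exact mul_le_of_le_one_left (Real.rpow_nonneg (lt_trans one_pos ht).le _)
          (Int.fract_lt_one t).le
    _ = 1 / s.re := by
        rw [h, Real.one_rpow, show -(s.re + 1) + 1 = -s.re by ring, neg_div_neg_eq]

lemma differentiableAt_fractIntegral {s : ℂ} (hs : 0 < s.re) :
    DifferentiableAt ℂ fractIntegral s := by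
  set f : ℝ → ℂ := (Ioi (1 : ℝ)).indicator fun t ↦ ((Int.fract t : ℝ) : ℂ) with hf
  have hfm : Measurable f := Measurable.indicator (by fun_prop) measurableSet_Ioi
  have hfb : ∀ t, ‖f t‖ ≤ 1 := by
    intro t
    by_cases ht : t ∈ Ioi (1 : ℝ)
    · rw [hf, indicator_of_mem ht, Complex.norm_real, Real.norm_eq_abs,
        abs_of_nonneg (Int.fract_nonneg t)]
      exact (Int.fract_lt_one t).le
    · rw [hf, indicator_of_notMem ht]; simp
  have hmel : fractIntegral = fun s ↦ mellin f (-s) := by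
    funext s
    rw [mellin, fractIntegral, ← integral_indicator measurableSet_Ioi,
      ← integral_indicator measurableSet_Ioi]
    congr 1
    funext t
    by_cases ht : t ∈ Ioi (1 : ℝ)
    · have ht0 : t ∈ Ioi (0 : ℝ) := mem_Ioi.mpr (lt_trans one_pos ht)
      rw [indicator_of_mem ht, indicator_of_mem ht0, hf, indicator_of_mem ht, smul_eq_mul,
        mul_comm, neg_add']
    · rw [indicator_of_notMem ht, hf]
      by_cases ht0 : t ∈ Ioi (0 : ℝ)
      · rw [indicator_of_mem ht0, indicator_of_notMem ht]; simp
      · rw [indicator_of_notMem ht0]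
  rw [hmel]
  have : DifferentiableAt ℂ (mellin f) (-s) := by
    refine mellin_differentiableAt_of_isBigO_rpow (a := 0) (b := -s.re - 1) ?_ ?_ ?_ ?_ ?_
    · refine LocallyIntegrable.locallyIntegrableOn ?_ _
      refine (locallyIntegrable_const (1 : ℝ)).mono hfm.aestronglyMeasurable ?_
      exact .of_forall fun t ↦ by simpa using hfb t
    · refine IsBigO.of_bound 1 (.of_forall fun t ↦ ?_)
      simpa using hfb t
    · simpa using hs
    · refine IsBigO.of_bound 1 ?_
      have : ∀ᶠ t in 𝓝[>] (0 : ℝ), t < 1 := nhdsWithin_le_nhds (gt_mem_nhds one_pos)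
      filter_upwards [this] with t ht
      rw [hf, indicator_of_notMem (by simp; linarith)]
      simp
    · simp
  exact this.comp s differentiableAt_id.neg

lemma zeta_eq_of_one_lt_re {s : ℂ} (hs : 1 < s.re) :
    riemannZeta s = s / (s - 1) - s * fractIntegral s := by
  have hs1 : s - 1 ≠ 0 := by
    intro h
    have := congrArg re h
    simp at this; linarith
  have hO : (fun n : ℕ ↦ ∑ k ∈ Finset.Icc 1 n, (1 : ℕ → ℂ) k) =O[atTop]
      fun n ↦ (n : ℝ) ^ (1 : ℝ) := by
    refine IsBigO.of_bound 1 (.of_forall fun n ↦ ?_)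
    simp
  rw [← LSeries_one_eq_riemannZeta hs,
    LSeries_eq_mul_integral 1 zero_le_one hs (LSeriesSummable_one_iff.mpr hs) hO]
  have hcongr : ∀ t ∈ Ioi (1 : ℝ),
      (∑ k ∈ Finset.Icc 1 ⌊t⌋₊, (1 : ℕ → ℂ) k) * (t : ℂ) ^ (-(s + 1)) =
        (t : ℂ) ^ (-s) - ((Int.fract t : ℝ) : ℂ) * (t : ℂ) ^ (-(s + 1)) := by
    intro t ht
    have ht0 : (0 : ℝ) < t := lt_trans one_pos ht
    have ht0' : (t : ℂ) ≠ 0 := by exact_mod_cast ht0.ne'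
    have h1 : (t : ℂ) ^ (-s) = t * (t : ℂ) ^ (-(s + 1)) := by
      rw [neg_add, cpow_add _ _ ht0', cpow_neg_one]
      field_simp
    have h2 : ((⌊t⌋₊ : ℕ) : ℂ) = t - ((Int.fract t : ℝ) : ℂ) := by
      have : ((⌊t⌋₊ : ℕ) : ℝ) = t - Int.fract t := by
        rw [natCast_floor_eq_intCast_floor ht0.le, Int.self_sub_fract]
      exact_mod_cast congrArg ofReal this
    simp only [Pi.one_apply, Finset.sum_const, Nat.card_Icc, add_tsub_cancel_right, nsmul_eq_mul,
      mul_one]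
    rw [h1, h2]; ring
  rw [setIntegral_congr_fun measurableSet_Ioi hcongr, integral_sub
    (integrableOn_Ioi_cpow_of_lt (by simpa using hs) one_pos)
    (integrableOn_fract_mul_cpow (by linarith)),
    integral_Ioi_cpow_of_lt (by simpa using hs) one_pos, ← fractIntegral]
  have h3 : -s + 1 ≠ 0 := by
    intro h; apply hs1; linear_combination -h
  simp only [ofReal_one, one_cpow]
  field_simp
  ring

/-- Continuation of `ζ` to `Re s > 0`, stated off the real axis, where the identity theorem can be
applied on a convex set. -/
lemma zeta_eq_of_im_pos {s : ℂ} (hs : 0 < s.re) (hi : 0 < s.im) :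
    riemannZeta s = s / (s - 1) - s * fractIntegral s := by
  set U : Set ℂ := {z | 0 < z.re} ∩ {z | 0 < z.im} with hU
  have hUo : IsOpen U := (isOpen_lt continuous_const continuous_re).inter
    (isOpen_lt continuous_const continuous_im)
  have hUc : IsPreconnected U :=
    ((convex_halfSpace_re_gt 0).inter (convex_halfSpace_im_gt 0)).isPreconnected
  have hne : ∀ z ∈ U, z ≠ 1 := by
    rintro z ⟨_, hz⟩ rfl
    simp at hz
  have h1 : AnalyticOnNhd ℂ riemannZeta U := DifferentiableOn.analyticOnNhd
    (fun z hz ↦ (differentiableAt_riemannZeta (hne z hz)).differentiableWithinAt) hUo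
  have h2 : AnalyticOnNhd ℂ (fun z ↦ z / (z - 1) - z * fractIntegral z) U :=
    DifferentiableOn.analyticOnNhd (fun z hz ↦ by
      have := differentiableAt_fractIntegral hz.1
      have hz1 : z - 1 ≠ 0 := sub_ne_zero.mpr (hne z hz)
      refine DifferentiableAt.differentiableWithinAt ?_
      fun_prop (disch := assumption)) hUo
  refine h1.eqOn_of_preconnected_of_eventuallyEq h2 hUc (z₀ := 2 + I) ?_ ?_ ⟨hs, hi⟩
  · constructor <;> simp
  · filter_upwards [(isOpen_lt continuous_const continuous_re).mem_nhds
      (show (1 : ℝ) < (2 + I : ℂ).re by simp)] with z hz using zeta_eq_of_one_lt_re hz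

lemma norm_zeta_le_of_im_pos {s : ℂ} (hs : 0 < s.re) (hi : 0 < s.im) :
    ‖riemannZeta s‖ ≤ ‖s‖ * (1 / s.im + 1 / s.re) := by
  rw [zeta_eq_of_im_pos hs hi]
  have h1 : s.im ≤ ‖s - 1‖ := by
    have := abs_im_le_norm (s - 1)
    simp only [sub_im, one_im, sub_zero] at this
    exact (le_abs_self _).trans this
  calc ‖s / (s - 1) - s * fractIntegral s‖ ≤ ‖s / (s - 1)‖ + ‖s * fractIntegral s‖ :=
        norm_sub_le _ _
    _ = ‖s‖ * (1 / ‖s - 1‖ + ‖fractIntegral s‖) := by rw [norm_div, norm_mul]; ring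
    _ ≤ ‖s‖ * (1 / s.im + 1 / s.re) := by
        gcongr
        exact norm_fractIntegral_le_inv hs

/-- `|ζ(s)| ≤ ζ(σ) ≤ σ / (σ - 1)`, the last step because `J(σ) ≥ 0`. -/
lemma norm_zeta_le_of_one_lt_re {s : ℂ} (hs : 1 < s.re) :
    ‖riemannZeta s‖ ≤ s.re / (s.re - 1) := by
  have hs' : 1 < ((s.re : ℝ) : ℂ).re := by simpa using hs
  have hsum : ∀ n : ℕ, ‖1 / (n : ℂ) ^ s‖ = 1 / (n : ℝ) ^ s.re := by
    intro n
    rcases Nat.eq_zero_or_pos n with rfl | hn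
    · have h1 : s ≠ 0 := by rintro rfl; simp at hs; linarith
      have h2 : s.re ≠ 0 := by linarith
      simp [h1, h2]
    · rw [norm_div, norm_natCast_cpow_of_pos hn, norm_one]
  have hsm : Summable fun n : ℕ ↦ 1 / (n : ℝ) ^ s.re := Real.summable_one_div_nat_rpow.mpr hs
  have hreal : riemannZeta (s.re : ℂ) = ((∑' n : ℕ, 1 / (n : ℝ) ^ s.re : ℝ) : ℂ) := by
    rw [zeta_eq_tsum_one_div_nat_cpow hs', ofReal_tsum]
    refine tsum_congr fun n ↦ ?_
    rw [ofReal_div, ofReal_one, ofReal_cpow (Nat.cast_nonneg n), ofReal_natCast]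
  have hJ : fractIntegral (s.re : ℂ) =
      ((∫ t in Ioi (1 : ℝ), Int.fract t * t ^ (-(s.re + 1)) : ℝ) : ℂ) := by
    rw [fractIntegral, ← integral_complex_ofReal]
    refine setIntegral_congr_fun measurableSet_Ioi fun t ht ↦ ?_
    simp only [ofReal_mul]
    rw [ofReal_cpow (lt_trans one_pos ht).le]
    simp
  have hpos : 0 ≤ ∫ t in Ioi (1 : ℝ), Int.fract t * t ^ (-(s.re + 1)) :=
    setIntegral_nonneg measurableSet_Ioi fun t ht ↦
      mul_nonneg (Int.fract_nonneg t) (Real.rpow_nonneg (lt_trans one_pos ht).le _)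
  have hval := zeta_eq_of_one_lt_re hs'
  rw [hreal, hJ] at hval
  have hval' : (∑' n : ℕ, 1 / (n : ℝ) ^ s.re) = s.re / (s.re - 1) -
      s.re * ∫ t in Ioi (1 : ℝ), Int.fract t * t ^ (-(s.re + 1)) := by
    exact_mod_cast hval
  rw [zeta_eq_tsum_one_div_nat_cpow hs]
  calc ‖∑' n : ℕ, 1 / (n : ℂ) ^ s‖ ≤ ∑' n : ℕ, ‖1 / (n : ℂ) ^ s‖ :=
        norm_tsum_le_tsum_norm (by simpa only [hsum] using hsm)
    _ = ∑' n : ℕ, 1 / (n : ℝ) ^ s.re := tsum_congr hsum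
    _ ≤ s.re / (s.re - 1) := by
        rw [hval']
        have := mul_nonneg (show 0 ≤ s.re by linarith) hpos
        linarith

/-- `|ζ(2+it) - 1| ≤ ζ(2) - 1 < 2/3`. -/
lemma norm_zeta_ge_of_re_eq_two {s : ℂ} (hs : s.re = 2) : 1 / 3 ≤ ‖riemannZeta s‖ := by
  have h1 : 1 < s.re := by linarith
  have hz := zeta_eq_tsum_one_div_nat_add_one_cpow h1
  have hnorm : ∀ n : ℕ, ‖1 / ((n : ℂ) + 1) ^ s‖ = 1 / ((n : ℝ) + 1) ^ 2 := by
    intro n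
    have := norm_natCast_cpow_of_pos (Nat.succ_pos n) s
    push_cast at this
    rw [norm_div, norm_one, this, hs]
    norm_cast
  have hbasel : HasSum (fun n : ℕ ↦ 1 / ((n : ℝ) + 1) ^ 2) (Real.pi ^ 2 / 6) := by
    have := (hasSum_nat_add_iff' 1).mpr hasSum_zeta_two
    simpa using this
  have hbasel' : HasSum (fun n : ℕ ↦ 1 / ((n + 1 : ℕ) + 1 : ℝ) ^ 2) (Real.pi ^ 2 / 6 - 1) := by
    have := (hasSum_nat_add_iff' 1).mpr hbasel
    simpa using this
  have hsm : Summable fun n : ℕ ↦ 1 / ((n : ℂ) + 1) ^ s :=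
    .of_norm (by simpa only [hnorm] using hbasel.summable)
  rw [hsm.tsum_eq_zero_add] at hz
  have htail : ‖∑' n : ℕ, 1 / (((n + 1 : ℕ) : ℂ) + 1) ^ s‖ ≤ Real.pi ^ 2 / 6 - 1 := by
    rw [← hbasel'.tsum_eq]
    refine tsum_of_norm_bounded hbasel'.summable.hasSum fun n ↦ (hnorm (n + 1)).le
  have hpi : Real.pi ^ 2 / 6 - 1 ≤ 2 / 3 := by
    have := Real.pi_lt_d2
    nlinarith [Real.pi_pos]
  have h0 : 1 / (((0 : ℕ) : ℂ) + 1) ^ s = 1 := by simp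
  rw [h0] at hz
  rw [hz]
  have := norm_sub_le_norm_add (1 : ℂ) (∑' n : ℕ, 1 / (((n + 1 : ℕ) : ℂ) + 1) ^ s)
  rw [norm_one] at this
  linarith

/-! ### Absence of low zeros -/

/-- `∫_k^{k+1} {t} t^{-3/2} dt`, bounded through the primitive `2 t^{1/2} + 2k t^{-1/2}` of
`(t - k) t^{-3/2}`. -/
lemma integral_fract_unit_le {k : ℕ} (hk : 1 ≤ k) :
    ∫ t in (k : ℝ)..(k + 1 : ℕ), Int.fract t * t ^ (-(1 / 2 + 1) : ℝ) ≤
      2 * (√(k + 1) + k / √(k + 1)) - 4 * √k := by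
  have hk' : (1 : ℝ) ≤ k := by exact_mod_cast hk
  push_cast
  have hpos : ∀ t ∈ uIcc (k : ℝ) (k + 1), 0 < t := by
    intro t ht
    rw [uIcc_of_le (by linarith)] at ht
    linarith [ht.1]
  have hcont : ContinuousOn (fun t : ℝ ↦ (t - k) * t ^ (-(1 / 2 + 1) : ℝ)) (uIcc (k : ℝ) (k + 1)) :=
    fun t ht ↦ ContinuousAt.continuousWithinAt
      ((continuousAt_id.sub continuousAt_const).mul
        (Real.continuousAt_rpow_const t _ (Or.inl (hpos t ht).ne')))
  have hftc := intervalIntegral.integral_eq_sub_of_hasDerivAt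
    (f := fun t : ℝ ↦ 2 * (√t + k / √t)) (f' := fun t : ℝ ↦ (t - k) * t ^ (-(1 / 2 + 1) : ℝ))
    (a := (k : ℝ)) (b := k + 1) (fun t ht ↦ by
      have ht0 := hpos t ht
      have hs0 : 0 < √t := Real.sqrt_pos.mpr ht0
      have h1 := Real.hasDerivAt_sqrt ht0.ne'
      have h2 := (h1.add ((hasDerivAt_const t (k : ℝ)).div h1 hs0.ne')).const_mul 2
      convert! h2 using 1
      have h3 : t ^ (-(1 / 2 + 1) : ℝ) = (√t * t)⁻¹ := by
        rw [Real.rpow_neg ht0.le, Real.rpow_add ht0, Real.rpow_one, Real.sqrt_eq_rpow]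
      rw [h3]
      have h4 : √t ^ 2 = t := Real.sq_sqrt ht0.le
      field_simp
      rw [h4]
      field_simp
      ring) hcont.intervalIntegrable
  have hint : IntervalIntegrable (fun t : ℝ ↦ Int.fract t * t ^ (-(1 / 2 + 1) : ℝ)) volume
      (k : ℝ) (k + 1) := by
    rw [intervalIntegrable_iff_integrableOn_Ioc_of_le (by linarith)]
    exact (integrableOn_fract_mul_rpow (by norm_num)).mono_set
      fun t ht ↦ lt_of_le_of_lt hk' ht.1
  calc _ ≤ ∫ t in (k : ℝ)..(k + 1), (t - k) * t ^ (-(1 / 2 + 1) : ℝ) := by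
        refine intervalIntegral.integral_mono_on (by linarith) hint hcont.intervalIntegrable ?_
        intro t ht
        have hfl : (k : ℤ) ≤ ⌊t⌋ := Int.le_floor.mpr (by exact_mod_cast ht.1)
        have hfl' : (k : ℝ) ≤ ⌊t⌋ := by exact_mod_cast hfl
        have : Int.fract t ≤ t - k := by
          rw [← Int.self_sub_floor]; linarith
        have ht0 : 0 < t := by linarith [ht.1]
        gcongr
    _ = _ := by
        rw [hftc]
        have : (k : ℝ) / √k = √k := Real.div_sqrt
        rw [this]; ring

/-- The first interval contributes `3√2 - 4`; the later ones telescope against `1 / √k`. -/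
lemma integral_fract_le (N : ℕ) :
    ∫ t in (1 : ℝ)..(N + 2 : ℕ), Int.fract t * t ^ (-(1 / 2 + 1) : ℝ) ≤
      19 / 20 - 1 / √((N : ℝ) + 2) := by
  have hint : ∀ a b : ℕ, 1 ≤ a → a ≤ b →
      IntervalIntegrable (fun t : ℝ ↦ Int.fract t * t ^ (-(1 / 2 + 1) : ℝ)) volume a b := by
    intro a b ha hab
    have ha' : (1 : ℝ) ≤ a := by exact_mod_cast ha
    rw [intervalIntegrable_iff_integrableOn_Ioc_of_le (by exact_mod_cast hab)]
    exact (integrableOn_fract_mul_rpow (by norm_num)).mono_set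
      fun t ht ↦ lt_of_le_of_lt ha' ht.1
  induction N with
  | zero =>
    have h := integral_fract_unit_le (k := 1) le_rfl
    norm_num at h ⊢
    have h2 : √2 ^ 2 = (2 : ℝ) := Real.sq_sqrt (by norm_num)
    have h3 : 0 < √(2 : ℝ) := Real.sqrt_pos.mpr (by norm_num)
    have h4 : (√2)⁻¹ = √2 / 2 := by
      field_simp; linarith
    have h5 : √2 ≤ 1.41422 := by
      rw [Real.sqrt_le_left (by norm_num)]; norm_num
    rw [h4] at h ⊢
    linarith
  | succ N ih =>
    have h := integral_fract_unit_le (k := N + 2) (by omega)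
    have hadd := intervalIntegral.integral_add_adjacent_intervals
      (hint 1 (N + 2) le_rfl (by omega)) (hint (N + 2) (N + 2 + 1) (by omega) (by omega))
    rw [Nat.cast_one] at hadd
    rw [show N + 1 + 2 = N + 2 + 1 by ring, ← hadd]
    push_cast at h ih ⊢
    rw [show (N : ℝ) + 1 + 2 = N + 2 + 1 by ring]
    set a := √((N : ℝ) + 2) with ha
    set b := √((N : ℝ) + 2 + 1) with hb
    have ha2 : a ^ 2 = N + 2 := Real.sq_sqrt (by positivity)
    have hb2 : b ^ 2 = N + 2 + 1 := Real.sq_sqrt (by positivity)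
    have ha0 : 0 < a := Real.sqrt_pos.mpr (by positivity)
    have hb0 : 0 < b := Real.sqrt_pos.mpr (by positivity)
    have hab : a ≤ b := Real.sqrt_le_sqrt (by linarith)
    have hb1 : b ^ 2 = a ^ 2 + 1 := by rw [ha2, hb2]
    rw [← ha2] at h ih
    -- with `b² - a² = 1` this is `2a (b - a) ≤ (b - a)(b + a)`
    have key : 2 * (b + a ^ 2 / b) - 4 * a ≤ 1 / a - 1 / b := by
      have e1 : 2 * (b + a ^ 2 / b) - 4 * a = 2 * (b - a) ^ 2 / b := by field_simp; ring
      have e2 : 1 / a - 1 / b = (b - a) / (a * b) := by field_simp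
      rw [e1, e2, div_le_div_iff₀ hb0 (by positivity)]
      have e3 : 2 * a * (b - a) ≤ 1 := by nlinarith [sq_nonneg (b - a)]
      have e4 := mul_le_mul_of_nonneg_left e3 (mul_nonneg (sub_nonneg.mpr hab) hb0.le)
      nlinarith
    rw [← ha2]
    linarith

/-- There is no zero on the critical line up to height `9/10`: there `ζ(s) = 0` would force
`|J(s)| = 1/|s - 1| > 19/20`. -/
lemma zeta_ne_zero_of_low {s : ℂ} (hs : s.re = 1 / 2) (hi : 0 < s.im) (hi' : s.im ≤ 9 / 10) :
    riemannZeta s ≠ 0 := by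
  intro h0
  have hbound : ‖fractIntegral s‖ ≤ 19 / 20 := by
    refine (norm_fractIntegral_le s).trans ?_
    rw [hs]
    have hlim := intervalIntegral_tendsto_integral_Ioi (μ := volume) (1 : ℝ)
      (integrableOn_fract_mul_rpow (σ := 1 / 2) (by norm_num))
      (tendsto_natCast_atTop_atTop.comp (tendsto_add_atTop_nat 2))
    refine le_of_tendsto' hlim fun N ↦ (integral_fract_le N).trans ?_
    have : 0 ≤ 1 / √((N : ℝ) + 2) := by positivity
    linarith
  have hs0 : s ≠ 0 := by rintro rfl; simp at hi
  have hs1 : s - 1 ≠ 0 := by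
    intro h
    have := congrArg im h
    simp at this; linarith
  rw [zeta_eq_of_im_pos (by rw [hs]; norm_num) hi] at h0
  have hJ : fractIntegral s * (s - 1) = 1 := by
    have := mul_left_cancel₀ hs0 (show s * (fractIntegral s * (s - 1)) = s * 1 by
      field_simp at h0
      linear_combination -h0)
    exact this
  have hn : ‖fractIntegral s‖ * ‖s - 1‖ = 1 := by rw [← norm_mul, hJ, norm_one]
  have hsq : ‖s - 1‖ ^ 2 ≤ 106 / 100 := by
    rw [Complex.sq_norm, normSq_apply]
    simp only [sub_re, one_re, sub_im, one_im, sub_zero, hs]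
    nlinarith
  have hle : ‖s - 1‖ < 104 / 100 := by
    by_contra! hc
    nlinarith
  nlinarith [norm_nonneg (s - 1), norm_nonneg (fractIntegral s)]

/-! ### The pointwise bound under the Riemann Hypothesis -/

lemma zeta_ne_zero_of_half_lt (hRH : RiemannHypothesis) {s : ℂ} (hs : 1 / 2 < s.re)
    (hi : 0 < s.im) : riemannZeta s ≠ 0 := by
  intro h
  have := hRH s h (by
    rintro ⟨n, rfl⟩
    norm_cast at hi) (by rintro rfl; simp at hi)
  linarith

/-- Littlewood-type bound under RH: `ζ(s) ≪ L^δ` for `|Re s - 1| ≤ 1/L` and `2 ≤ Im s ≤ e^{2L}`. -/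
lemma zeta_le_rpow_of_RH (hRH : RiemannHypothesis) {δ : ℝ} (hδ : 0 < δ) (hδ1 : δ ≤ 1) :
    ∃ K : ℝ, 0 < K ∧ ∃ L₀ : ℝ, 1 ≤ L₀ ∧ ∀ L ≥ L₀, ∀ s : ℂ, |s.re - 1| ≤ L⁻¹ → 2 ≤ s.im →
      s.im ≤ Real.exp (2 * L) → ‖riemannZeta s‖ ≤ K * L ^ δ := by
  obtain ⟨h, hh0, hh8, hlog⟩ := log_growth hδ
  obtain ⟨D, hD, hlog⟩ := hlog ((1 + h / 2) / (h / 2)) (by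
    rw [le_div_iff₀ (by positivity)]; linarith)
  have hsmall : ∀ᶠ L : ℝ in atTop, L ^ (-δ) < h / 2 :=
    (tendsto_rpow_neg_atTop hδ).eventually_lt_const (by positivity)
  obtain ⟨L₁, hL₁⟩ := eventually_atTop.mp hsmall
  refine ⟨2 * Real.exp ((2 * D + 1) / h * 2), by positivity, max L₁ 1, le_max_right _ _, ?_⟩
  intro L hL s hre him him'
  have hL1 : 1 ≤ L := (le_max_right _ _).trans hL
  have hL0 : 0 < L := by linarith
  have hLh : L ^ (-δ) < h / 2 := hL₁ L ((le_max_left _ _).trans hL)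
  have hLδ : 1 ≤ L ^ δ := Real.one_le_rpow hL1 hδ.le
  have hLn : 0 < L ^ (-δ) := by positivity
  have hinv : L⁻¹ ≤ L ^ (-δ) := by
    rw [← Real.rpow_neg_one]
    exact Real.rpow_le_rpow_of_exponent_le hL1 (by linarith)
  have hmul : L ^ δ * L ^ (-δ) = 1 := by
    rw [← Real.rpow_add hL0]; simp
  set t := s.im with ht
  set c : ℂ := 2 + t * I with hc
  have hcre : c.re = 2 := by simp [hc]
  have hcim : c.im = t := by simp [hc]
  have hpt : ∀ z : ℂ, ‖z‖ < 3 / 2 → 1 / 2 < (c + z).re ∧ 1 / 2 < (c + z).im := by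
    intro z hz
    have h1 := (abs_le.mp (abs_re_le_norm z)).1
    have h2 := (abs_le.mp (abs_im_le_norm z)).1
    rw [add_re, add_im, hcre, hcim]
    constructor <;> linarith
  obtain ⟨G, hG, hfG, hGb⟩ := hlog L hL1 (fun z ↦ riemannZeta (c + z))
    (by
      intro z hz
      have hz' := hpt z (by simpa using hz)
      have hne : c + z ≠ 1 := by
        intro h
        rw [h] at hz'
        norm_num at hz'
      exact ((differentiableAt_riemannZeta hne).comp z
        (differentiableAt_id.const_add c)).differentiableWithinAt)
    (by
      intro z hz
      have hz' := hpt z (by simpa using hz)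
      exact zeta_ne_zero_of_half_lt hRH hz'.1 (by linarith [hz'.2]))
    (by
      rw [add_zero]
      exact norm_zeta_ge_of_re_eq_two hcre)
    (by
      intro z hz
      have h1 := (abs_le.mp (abs_re_le_norm z)).1
      have h2 : 1 + h / 2 ≤ (c + z).re := by rw [add_re, hcre]; linarith
      refine (norm_zeta_le_of_one_lt_re (by linarith)).trans ?_
      rw [div_le_div_iff₀ (by linarith) (by positivity)]
      nlinarith)
    (by
      intro z hz
      have hz' := hpt z hz
      have hcn : ‖c + z‖ ≤ 3 * t := by
        have h1 : ‖c‖ ≤ 2 + t := by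
          refine (norm_add_le _ _).trans ?_
          simp [abs_of_nonneg (show 0 ≤ t by linarith)]
        have := norm_add_le c z
        linarith
      have h4 : 1 / (c + z).im + 1 / (c + z).re ≤ 4 := by
        have h1 : 1 / (c + z).im ≤ 2 := by
          rw [div_le_iff₀ (by linarith [hz'.2])]; linarith [hz'.2]
        have h2 : 1 / (c + z).re ≤ 2 := by
          rw [div_le_iff₀ (by linarith [hz'.1])]; linarith [hz'.1]
        linarith
      have he : (12 : ℝ) ≤ Real.exp (3 * L) := by
        have h1 : (2.7 : ℝ) ≤ Real.exp 1 := by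
          have := Real.exp_one_gt_d9; linarith
        have h2 : Real.exp 3 = Real.exp 1 ^ 3 := by rw [← Real.exp_nat_mul]; norm_num
        have h3 : (2.7 : ℝ) ^ 3 ≤ Real.exp 1 ^ 3 := by gcongr
        have h4 : Real.exp 3 ≤ Real.exp (3 * L) := by gcongr; linarith
        norm_num at h3
        linarith
      calc ‖riemannZeta (c + z)‖ ≤ ‖c + z‖ * (1 / (c + z).im + 1 / (c + z).re) :=
            norm_zeta_le_of_im_pos (by linarith [hz'.1]) (by linarith [hz'.2])
        _ ≤ 3 * t * 4 := by
            gcongr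
            have := hz'.1
            have := hz'.2
            exact add_nonneg (by positivity) (by positivity)
        _ = 12 * t := by ring
        _ ≤ Real.exp (3 * L) * Real.exp (2 * L) := by gcongr
        _ = Real.exp (5 * L) := by rw [← Real.exp_add]; ring_nf)
  -- compare `s` with `s₁ = 1 + L^{-δ} + it`, where `|ζ(s₁)| ≤ 2 L^δ` is trivial
  set z₁ : ℂ := ((L ^ (-δ) - 1 : ℝ) : ℂ) with hz₁
  set z : ℂ := ((s.re - 2 : ℝ) : ℂ) with hz
  have hcz : c + z = s := by
    apply Complex.ext
    · rw [add_re, hcre, hz, ofReal_re]; ring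
    · rw [add_im, hcim, hz, ofReal_im, add_zero]
  have hz₁n : ‖z₁‖ = 1 - L ^ (-δ) := by
    rw [hz₁, norm_real, Real.norm_eq_abs, abs_of_nonpos (by linarith)]; ring
  have hre' := abs_le.mp hre
  have hdist : dist z z₁ ≤ 2 * L ^ (-δ) := by
    rw [dist_eq, hz, hz₁, ← ofReal_sub, norm_real, Real.norm_eq_abs, abs_le]
    constructor <;> linarith
  have hzb : ‖z‖ ≤ 1 + h := by
    have := norm_sub_norm_le z z₁
    rw [← dist_eq] at this
    linarith
  have hGdist : dist (G z) (G z₁) ≤ (2 * D * L ^ δ) / h * dist z z₁ := by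
    have hsub : ∀ w ∈ Metric.ball z₁ h, ‖w‖ ≤ 1 + h := by
      intro w hw
      have h1 := norm_sub_norm_le w z₁
      rw [← dist_eq] at h1
      have h2 := Metric.mem_ball.mp hw
      linarith
    refine dist_le_div_mul_dist_of_mapsTo_ball (hG.mono ?_) ?_ ?_
    · intro w hw
      have := hsub w hw
      simp only [Metric.mem_ball, dist_zero_right]
      linarith
    · intro w hw
      have h1 := hGb w (hsub w hw)
      have h2 := hGb z₁ (by linarith)
      rw [Metric.mem_closedBall]
      refine (dist_le_norm_add_norm _ _).trans ?_
      linarith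
    · rw [Metric.mem_ball]; linarith
  have hGdist' : (G z).re - (G z₁).re ≤ (2 * D + 1) / h * 2 := by
    calc (G z).re - (G z₁).re = (G z - G z₁).re := by rw [sub_re]
      _ ≤ ‖G z - G z₁‖ := (le_abs_self _).trans (abs_re_le_norm _)
      _ ≤ (2 * D * L ^ δ) / h * dist z z₁ := by rw [← dist_eq]; exact hGdist
      _ ≤ (2 * D * L ^ δ) / h * (2 * L ^ (-δ)) := by gcongr
      _ = 2 * D / h * 2 * (L ^ δ * L ^ (-δ)) := by ring
      _ ≤ (2 * D + 1) / h * 2 := by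
          rw [hmul, mul_one]
          gcongr
          linarith
  have hζ₁ : ‖riemannZeta (c + z₁)‖ ≤ 2 * L ^ δ := by
    have h1 : (c + z₁).re = 1 + L ^ (-δ) := by
      rw [add_re, hcre, hz₁, ofReal_re]; ring
    refine (norm_zeta_le_of_one_lt_re (by rw [h1]; linarith)).trans ?_
    rw [h1, div_le_iff₀ (by linarith), add_sub_cancel_left, mul_assoc, hmul]
    linarith
  have e1 := hfG z (by simp; linarith)
  have e2 := hfG z₁ (by simp; linarith)
  simp only [add_zero, hcz] at e1 e2
  have e3 : riemannZeta s = riemannZeta (c + z₁) * exp (G z - G z₁) := by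
    rw [e1, e2, exp_sub]
    field_simp [exp_ne_zero]
  rw [e3, norm_mul, norm_exp, sub_re]
  calc _ ≤ 2 * L ^ δ * Real.exp ((2 * D + 1) / h * 2) := by gcongr
    _ = _ := by ring

lemma finite_nontrivialZeros (T : ℝ) : (nontrivialZeros T).Finite := by
  have hK : IsCompact (Icc (0 : ℝ) 1 ×ℂ Icc (0 : ℝ) T) := isCompact_Icc.reProdIm isCompact_Icc
  refine hK.inter_riemannZetaZeros_finite.subset ?_
  rintro ρ ⟨h0, h1, h2, h3, h4⟩
  exact ⟨mem_reProdIm.mpr ⟨⟨h1.le, h2.le⟩, ⟨h3.le, h4⟩⟩, h0⟩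

/-- Pointwise form of the moment bound: each term is `≪ (log T)^δ`. The zero `ρ` lies above height
`9/10` while `|Im α| ≤ 7/8`, so `ρ + α` stays away from the pole. -/
lemma zeta_shifted_zero_le (hRH : RiemannHypothesis) {δ : ℝ} (hδ : 0 < δ) (hδ1 : δ ≤ 1) :
    ∃ K : ℝ, 0 < K ∧ ∃ T₀ : ℝ, Real.exp 1 ≤ T₀ ∧ ∀ T ≥ T₀, ∀ α : ℂ,
      ‖α‖ ≤ 1 → |α.re - 1 / 2| ≤ (Real.log T)⁻¹ → ∀ ρ ∈ nontrivialZeros T,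
        ‖riemannZeta (ρ + α)‖ ≤ K * Real.log T ^ δ := by
  obtain ⟨K, hK, L₀, hL₀, hbd⟩ := zeta_le_rpow_of_RH hRH hδ hδ1
  refine ⟨max K 200, by positivity, Real.exp (max L₀ 100), ?_, ?_⟩
  · gcongr
    exact hL₀.trans (le_max_left _ _)
  intro T hT α hα hαre ρ hρ
  have hT0 : 0 < T := (Real.exp_pos _).trans_le hT
  have hL : max L₀ 100 ≤ Real.log T := (Real.le_log_iff_exp_le hT0).mpr hT
  have hL1 : 100 ≤ Real.log T := (le_max_right _ _).trans hL
  have hT1 : 101 ≤ T := by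
    have := Real.log_le_sub_one_of_pos hT0; linarith
  obtain ⟨hz, hre0, hre1, him0, himT⟩ := hρ
  have hρre : ρ.re = 1 / 2 := hRH ρ hz (by
    rintro ⟨n, rfl⟩
    norm_cast at him0) (by rintro rfl; simp at him0)
  have hρim : 9 / 10 < ρ.im := by
    by_contra! hc
    exact zeta_ne_zero_of_low hρre him0 hc hz
  have hinv : (Real.log T)⁻¹ ≤ 1 / 100 := by
    rw [one_div]; exact inv_anti₀ (by norm_num) hL1
  have hαre' := abs_le.mp hαre
  have hαn : α.re ^ 2 + α.im ^ 2 ≤ 1 := by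
    have := Complex.sq_norm α
    rw [normSq_apply] at this
    nlinarith [norm_nonneg α]
  have hαim : |α.im| ≤ 7 / 8 := by
    rw [← abs_of_pos (show (0 : ℝ) < 7 / 8 by norm_num), ← sq_le_sq]
    nlinarith
  have hαim' := abs_le.mp hαim
  have hsre : (ρ + α).re - 1 = α.re - 1 / 2 := by rw [add_re, hρre]; ring
  have hLδ : 1 ≤ Real.log T ^ δ := Real.one_le_rpow (by linarith) hδ.le
  rcases le_or_gt 2 (ρ + α).im with h2 | h2
  · have hup : (ρ + α).im ≤ Real.exp (2 * Real.log T) := by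
      rw [mul_comm, Real.exp_mul, Real.exp_log hT0, add_im]
      norm_num
      nlinarith
    refine (hbd _ ((le_max_left _ _).trans hL) _ (by rw [hsre]; exact hαre) h2 hup).trans ?_
    gcongr
    exact le_max_left _ _
  · have hi : 1 / 40 ≤ (ρ + α).im := by rw [add_im]; linarith
    have hr : 99 / 100 ≤ (ρ + α).re := by linarith
    have hr' : (ρ + α).re ≤ 101 / 100 := by linarith
    have hn : ‖ρ + α‖ ≤ 101 / 100 + 2 := by
      refine (norm_le_abs_re_add_abs_im _).trans ?_
      rw [abs_of_nonneg (by linarith), abs_of_nonneg (by linarith)]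
      linarith
    have hb : 1 / (ρ + α).im + 1 / (ρ + α).re ≤ 40 + 2 := by
      have h1 : 1 / (ρ + α).im ≤ 40 := by
        rw [div_le_iff₀ (by linarith)]; linarith
      have h2 : 1 / (ρ + α).re ≤ 2 := by
        rw [div_le_iff₀ (by linarith)]; linarith
      linarith
    calc ‖riemannZeta (ρ + α)‖ ≤ ‖ρ + α‖ * (1 / (ρ + α).im + 1 / (ρ + α).re) :=
          norm_zeta_le_of_im_pos (by linarith) (by linarith)
      _ ≤ (101 / 100 + 2) * (40 + 2) := by
          gcongr
      _ ≤ max K 200 := le_max_of_le_right (by norm_num)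
      _ ≤ max K 200 * Real.log T ^ δ := le_mul_of_one_le_right (by positivity) hLδ

theorem moments_of_zeta_shifted_upper_bound (hRH : RiemannHypothesis)
    (k : ℝ) (hk : 0 < k) (ε : ℝ) (hε : 0 < ε) :
    ∃ C > 0, ∃ T₀ : ℝ, ∀ T ≥ T₀, ∀ α : ℂ,
      ‖α‖ ≤ 1 → |α.re - 1 / 2| ≤ (Real.log T)⁻¹ →
      (∑' ρ : nontrivialZeros T, ‖riemannZeta ((ρ : ℂ) + α)‖ ^ (2 * k)) ≤
        C * (Nat.card (nontrivialZeros T)) * Real.log T ^ (k ^ 2 + ε) := by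
  have hδ : 0 < min ((k ^ 2 + ε) / (2 * k)) 1 := by positivity
  obtain ⟨K, hK, T₀, hT₀, hbd⟩ := zeta_shifted_zero_le hRH hδ (min_le_right _ _)
  refine ⟨K ^ (2 * k), by positivity, T₀, fun T hT α hα hαre ↦ ?_⟩
  have hT0 : 0 < T := (Real.exp_pos 1).trans_le (hT₀.trans hT)
  have hL : 1 ≤ Real.log T := (Real.le_log_iff_exp_le hT0).mpr (hT₀.trans hT)
  have hterm : ∀ ρ : nontrivialZeros T, ‖riemannZeta ((ρ : ℂ) + α)‖ ^ (2 * k) ≤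
      K ^ (2 * k) * Real.log T ^ (k ^ 2 + ε) := by
    intro ρ
    calc ‖riemannZeta ((ρ : ℂ) + α)‖ ^ (2 * k)
        ≤ (K * Real.log T ^ (min ((k ^ 2 + ε) / (2 * k)) 1)) ^ (2 * k) := by
          gcongr
          exact hbd T hT α hα hαre ρ ρ.2
      _ ≤ (K * Real.log T ^ ((k ^ 2 + ε) / (2 * k))) ^ (2 * k) := by
          gcongr
          · exact min_le_left _ _
      _ = K ^ (2 * k) * Real.log T ^ (k ^ 2 + ε) := by
          rw [Real.mul_rpow hK.le (by positivity), ← Real.rpow_mul (by linarith)]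
          congr 2
          field_simp
  have := (finite_nontrivialZeros T).fintype
  rw [tsum_fintype, Nat.card_eq_fintype_card]
  refine (Finset.sum_le_card_nsmul _ _ _ fun ρ _ ↦ hterm ρ).trans_eq ?_
  rw [Finset.card_univ, nsmul_eq_mul]
  ring
end

section
/- Assume the Riemann Hypothesis and write τ = |t| + 3. Then the estimate −Re (ζ'/ζ)(σ + it) ≤ (1/2) log τ + O(1) holds uniformly for 1/2 ≤ σ ≤ 1, provided σ + it is neither 1 nor a zero of ζ(s). -/
open Complex

/-!
Let `ξ(s) = s (s - 1) π ^ (-s/2) Γ(s/2) ζ(s)`, an entire function with `ξ(1 - s) = ξ(s)`. Taking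
logarithmic derivatives,

`-Re ζ'/ζ (s) = Re 1/s + Re 1/(s - 1) - (log π)/2 + (1/2) Re Γ'/Γ (s/2) - Re ξ'/ξ (s)`.

For `1/2 ≤ Re s ≤ 1` the first term is at most `2`, the second is nonpositive, and the digamma term
is at most `(1/2) log τ + O(1)` (`re_logDeriv_Gamma_le`). So everything reduces to
`Re ξ'/ξ ≥ 0` on `Re s ≥ 1/2` (`re_logDeriv_riemannXi_nonneg`), which is where the Riemann
hypothesis enters.

The classical proof of this positivity differentiates the Hadamard product of `ξ`. The product is
avoided here: it is enough that `|ξ(σ + it)|` is nondecreasing in `σ ≥ 1/2`. For `0 < δ < 1` the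
quotient `ξ(s - δ) / ξ(s)` is holomorphic on `Re s ≥ (1 + δ)/2`, because `ξ` has no zeros there. On
the boundary line, `s - δ` is the reflection of `s` in the critical line, so the functional
equation gives modulus one. The Phragmén–Lindelöf principle in the half-plane then yields
`|ξ(s - δ)| ≤ |ξ(s)|` (`riemannXi_shift_le`), provided the quotient is at most `exp (O(1 + |s|))`
and bounded on the real axis.

This growth condition comes from three facts. Far to the right, the quotient is controlled by a Beta
integral and by the Dirichlet series of `ζ` and `1/ζ` (`norm_riemannXi_sub_le`). On vertical strips
`ξ` is at most exponentially large, since the entire completed zeta function is a Mellin transform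
(`riemannXi_upper`). On strips strictly to the right of the critical line `ξ` is at most
exponentially small, by Borel–Carathéodory applied to `log ξ` (`riemannXi_lower`).
-/

/-! ### The function `ξ` and its growth -/

/-- The modified completed function of a functional-equation pair is a Mellin transform that
converges everywhere, hence it is bounded on vertical strips. -/
lemma weakFEPair_bounded_strip {E : Type*} [NormedAddCommGroup E] [NormedSpace ℂ E]
    (P : WeakFEPair E) (a b : ℝ) :
    ∃ C : ℝ, ∀ s : ℂ, a ≤ s.re → s.re ≤ b → ‖P.Λ₀ s‖ ≤ C := by
  have conv (s : ℂ) : MellinConvergent P.f_modif s :=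
    (P.isStrongFEPair_toStrongFEPair.hasMellin s).1
  have ia := (conv a).norm
  have ib := (conv b).norm
  refine ⟨∫ t in Set.Ioi (0 : ℝ), (‖(t : ℂ) ^ ((a : ℂ) - 1) • P.f_modif t‖ +
    ‖(t : ℂ) ^ ((b : ℂ) - 1) • P.f_modif t‖), fun s has hsb ↦ ?_⟩
  refine MeasureTheory.norm_integral_le_of_norm_le (ia.add ib) ?_
  refine (MeasureTheory.ae_restrict_iff' measurableSet_Ioi).mpr (.of_forall fun t ht ↦ ?_)
  have ht : 0 < t := ht
  simp only [norm_smul, norm_cpow_eq_rpow_re_of_pos ht, sub_re, one_re, ofReal_re]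
  rw [← add_mul]
  gcongr
  rcases le_total t 1 with h1 | h1
  · have := Real.rpow_le_rpow_of_exponent_ge ht h1 (sub_le_sub_right has 1)
    have := Real.rpow_pos_of_pos ht (b - 1)
    linarith
  · have := Real.rpow_le_rpow_of_exponent_le h1 (sub_le_sub_right hsb 1)
    have := Real.rpow_pos_of_pos ht (a - 1)
    linarith

/-- Riemann's entire function `ξ(s) = s (s - 1) Λ(s)` (without the customary factor `1 / 2`),
written through Mathlib's entire `Λ₀(s) = Λ(s) + 1 / s + 1 / (1 - s)` so that no junk value
occurs at `s = 0, 1`. -/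
noncomputable def riemannXi (s : ℂ) : ℂ := s * (s - 1) * completedRiemannZeta₀ s + 1

lemma differentiable_riemannXi : Differentiable ℂ riemannXi := by
  have := differentiable_completedZeta₀
  unfold riemannXi
  fun_prop

lemma riemannXi_one_sub (s : ℂ) : riemannXi (1 - s) = riemannXi s := by
  simp only [riemannXi, completedRiemannZeta₀_one_sub]
  ring

lemma riemannXi_eq {s : ℂ} (hs : 0 < s.re) (h1 : s ≠ 1) :
    riemannXi s = s * (s - 1) * (Gammaℝ s * riemannZeta s) := by
  have h0 : s ≠ 0 := by rintro rfl; simp at hs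
  have h2 : s - 1 ≠ 0 := sub_ne_zero.mpr h1
  have h3 : 1 - s ≠ 0 := sub_ne_zero.mpr h1.symm
  rw [riemannZeta_def_of_ne_zero h0, mul_div_cancel₀ _ (Gammaℝ_ne_zero_of_re_pos hs),
    completedRiemannZeta_eq, riemannXi]
  field_simp
  ring

lemma riemannXi_ne_zero (hRH : RiemannHypothesis) {s : ℂ} (hs : 1 / 2 < s.re) :
    riemannXi s ≠ 0 := by
  have hs0 : 0 < s.re := by linarith
  by_cases h1 : s = 1
  · simp [h1, riemannXi]
  have h0 : s ≠ 0 := by rintro rfl; simp at hs0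
  rw [riemannXi_eq hs0 h1]
  refine mul_ne_zero (mul_ne_zero h0 (sub_ne_zero.mpr h1))
    (mul_ne_zero (Gammaℝ_ne_zero_of_re_pos hs0) fun hz ↦ ?_)
  refine hs.ne' (hRH s hz ?_ h1)
  rintro ⟨n, rfl⟩
  have : ((-2 * ((n : ℂ) + 1)).re) = -2 * ((n : ℝ) + 1) := by simp
  rw [this] at hs0
  have : (0 : ℝ) ≤ n := n.cast_nonneg
  linarith

lemma norm_riemannXi_conj {s : ℂ} (hs : 0 < s.re) (h1 : s ≠ 1) :
    ‖riemannXi (starRingEnd ℂ s)‖ = ‖riemannXi s‖ := by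
  have h1' : starRingEnd ℂ s ≠ 1 := fun h ↦ h1 (by simpa using congrArg (starRingEnd ℂ) h)
  rw [riemannXi_eq hs h1, riemannXi_eq (by simpa using hs) h1', riemannZeta_conj, Gammaℝ_def,
    Gammaℝ_def]
  have e1 : ‖starRingEnd ℂ s - 1‖ = ‖s - 1‖ := by
    rw [← norm_conj (s - 1)]; simp
  have e2 : ‖Gamma (starRingEnd ℂ s / 2)‖ = ‖Gamma (s / 2)‖ := by
    rw [← norm_conj (Gamma (s / 2)), ← Gamma_conj, map_div₀, map_ofNat]
  simp only [norm_mul, norm_conj, e1, e2, norm_cpow_eq_rpow_re_of_pos Real.pi_pos]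
  simp

/-- On vertical strips `ξ` grows at most exponentially. This is far from sharp, but it
matches the lower bound available under the Riemann hypothesis. -/
lemma riemannXi_upper (a b : ℝ) : ∃ A : ℝ, 0 < A ∧ ∀ s : ℂ, a ≤ s.re → s.re ≤ b →
    ‖riemannXi s‖ ≤ Real.exp (A * (1 + |s.im|)) := by
  obtain ⟨C, hC⟩ := weakFEPair_bounded_strip (HurwitzZeta.hurwitzEvenFEPair 0) (a / 2) (b / 2)
  -- on the strip `‖s‖ ≤ N (1 + |Im s|)`, and a quadratic is dominated by an exponential
  set N := |a| + |b| + 1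
  have hN : 0 < N := by positivity
  set D := (N + 1) ^ 2 * |C| + 1
  have hD : 0 < D := by positivity
  refine ⟨2 + D, by positivity, fun s has hsb ↦ ?_⟩
  have hL : ‖completedRiemannZeta₀ s‖ ≤ |C| := by
    have h := hC (s / 2) (by simp; linarith) (by simp; linarith)
    have : completedRiemannZeta₀ s = (HurwitzZeta.hurwitzEvenFEPair 0).Λ₀ (s / 2) / 2 := rfl
    rw [this, norm_div]
    have := le_abs_self C
    have := norm_nonneg ((HurwitzZeta.hurwitzEvenFEPair 0).Λ₀ (s / 2))
    norm_num
    linarith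
  set y := 1 + |s.im| with hy
  have hy1 : 1 ≤ y := by simp [hy]
  have hn : ‖s‖ ≤ N * y := by
    have h1 := norm_le_abs_re_add_abs_im s
    have h2 : |s.re| ≤ |a| + |b| := by
      rw [abs_le]
      constructor
      · linarith [neg_abs_le a, abs_nonneg b]
      · linarith [le_abs_self b, abs_nonneg a]
    nlinarith [abs_nonneg s.im, abs_nonneg a, abs_nonneg b]
  have hn1 : ‖s - 1‖ ≤ (N + 1) * y := by
    have := norm_sub_le s 1
    rw [norm_one] at this
    nlinarith
  have hn0 : ‖s‖ ≤ (N + 1) * y := by nlinarith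
  calc ‖riemannXi s‖ ≤ ‖s‖ * ‖s - 1‖ * ‖completedRiemannZeta₀ s‖ + 1 := by
        unfold riemannXi
        refine (norm_add_le _ _).trans ?_
        simp
    _ ≤ ((N + 1) * y) * ((N + 1) * y) * |C| + 1 := by gcongr
    _ ≤ D * y ^ 2 := by
        have : 1 ≤ y ^ 2 := one_le_pow₀ hy1
        simp only [D]; nlinarith
    _ ≤ Real.exp (D * y) * Real.exp (2 * y) := by
        have h1 : D ≤ Real.exp (D * y) := by
          have := Real.add_one_le_exp (D * y)
          nlinarith
        have h2 : y ^ 2 ≤ Real.exp (2 * y) := by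
          have := Real.add_one_le_exp y
          rw [two_mul, Real.exp_add, ← sq]
          gcongr
          linarith
        gcongr
    _ = _ := by rw [← Real.exp_add]; ring_nf

/-! ### Auxiliary lower bounds -/

/-- **Minimum-modulus form of Borel–Carathéodory**: a zero-free entire function on a disc which is
not too large there and not too small at the centre is not too small on a smaller disc. -/
lemma norm_lower_of_ne_zero {F : ℂ → ℂ} (hF : Differentiable ℂ F) {c : ℂ} {r R U V : ℝ}
    (hr : 0 ≤ r) (hrR : r < R) (hne : ∀ z ∈ Metric.ball c R, F z ≠ 0)
    (hU : ∀ z ∈ Metric.ball c R, ‖F z‖ ≤ Real.exp U) (hV : Real.exp (-V) ≤ ‖F c‖)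
    (hUV : 0 < U + V) {z : ℂ} (hz : ‖z - c‖ ≤ r) :
    Real.exp (-(V + 2 * (U + V) * r / (R - r))) ≤ ‖F z‖ := by
  have hR : 0 < R := hr.trans_lt hrR
  have hmem {w : ℂ} (hw : w ∈ Metric.ball (0 : ℂ) R) : c + w ∈ Metric.ball c R := by
    simpa using hw
  have hdiff : Differentiable ℂ fun w ↦ F (c + w) := by fun_prop
  have hne' : ∀ w ∈ Metric.ball (0 : ℂ) R, F (c + w) ≠ 0 := fun w hw ↦ hne _ (hmem hw)
  -- a holomorphic logarithm of `F (c + w) / F c`, as a primitive of the logarithmic derivative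
  have hld : DifferentiableOn ℂ (logDeriv fun w ↦ F (c + w)) (Metric.ball 0 R) := by
    intro w hw
    have : Differentiable ℂ (deriv fun w ↦ F (c + w)) := hdiff.deriv
    exact ((this w).div (hdiff w) (hne' w hw)).differentiableWithinAt
  obtain ⟨L, hL0, hL⟩ := (hld.isExactOn_ball).with_val_at 0 0
  have h0 : (0 : ℂ) ∈ Metric.ball (0 : ℂ) R := by simpa using hR
  have hexp : ∀ w ∈ Metric.ball (0 : ℂ) R, F (c + w) = F c * exp (L w) := by
    intro w hw
    have hcd : ∀ x ∈ Metric.ball (0 : ℂ) R,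
        HasDerivAt (fun w ↦ F (c + w) * exp (-L w)) 0 x := by
      intro x hx
      have h1 := (hdiff x).hasDerivAt.mul (hL x hx).neg.cexp
      refine h1.congr_deriv ?_
      have := hne' x hx
      simp only [logDeriv_apply, Pi.neg_apply]
      field_simp
      ring
    have := (convex_ball (0 : ℂ) R).is_const_of_fderivWithin_eq_zero (𝕜 := ℂ)
      (f := fun w ↦ F (c + w) * exp (-L w))
      (fun x hx ↦ (hcd x hx).differentiableAt.differentiableWithinAt)
      (fun x hx ↦ by
        rw [fderivWithin_of_isOpen Metric.isOpen_ball hx]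
        ext
        simpa using (hcd x hx).deriv) hw h0
    simp only [hL0, add_zero, neg_zero, exp_zero, mul_one] at this
    rw [← this, mul_assoc, ← exp_add]
    simp
  have hre : Set.MapsTo L (Metric.ball 0 R) {z | z.re ≤ U + V} := by
    intro w hw
    have h1 := hU _ (hmem hw)
    rw [hexp w hw, norm_mul, norm_exp] at h1
    have h2 : Real.exp (-V) * Real.exp (L w).re ≤ Real.exp U :=
      (mul_le_mul_of_nonneg_right hV (Real.exp_pos _).le).trans h1
    rw [← Real.exp_add, Real.exp_le_exp] at h2
    change (L w).re ≤ U + V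
    linarith
  have hzb : z - c ∈ Metric.ball (0 : ℂ) R := by simpa using hz.trans_lt hrR
  have hbc := borelCaratheodory_zero hUV
    (fun x hx ↦ (hL x hx).differentiableAt.differentiableWithinAt) hre hR hzb hL0
  have hbc' : ‖L (z - c)‖ ≤ 2 * (U + V) * r / (R - r) := by
    refine hbc.trans ?_
    have : 0 < R - r := by linarith
    gcongr
  have hfz := hexp _ hzb
  rw [add_sub_cancel] at hfz
  rw [hfz, norm_mul, norm_exp, neg_add, Real.exp_add]
  gcongr
  linarith [neg_le_abs (L (z - c)).re, abs_re_le_norm (L (z - c))]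

/-- To the right of `Re w = 1 + h`, the shift `w ↦ w - h` does not enlarge `Γ` by more than a
constant factor, because the Beta integral `Γ(w - h) Γ(h) / Γ(w)` is bounded there. -/
lemma norm_Gamma_sub_le {h : ℝ} (hh : 0 < h) :
    ∃ K : ℝ, 0 < K ∧ ∀ w : ℂ, 1 + h ≤ w.re → ‖Gamma (w - h)‖ ≤ K * ‖Gamma w‖ := by
  have hG : Gamma (h : ℂ) ≠ 0 := Gamma_ne_zero_of_re_pos (by simpa using hh)
  have hGpos : 0 < ‖Gamma (h : ℂ)‖ := norm_pos_iff.mpr hG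
  have hint := (betaIntegral_convergent (u := 1) (v := h) (by simp) (by simpa using hh)).norm
  simp only [sub_self, cpow_zero, one_mul] at hint
  set J := ∫ x in (0 : ℝ)..1, ‖(1 - (x : ℂ)) ^ ((h : ℂ) - 1)‖
  have hJ : 0 ≤ J := intervalIntegral.integral_nonneg zero_le_one fun _ _ ↦ norm_nonneg _
  refine ⟨(J + 1) / ‖Gamma (h : ℂ)‖, by positivity, fun w hw ↦ ?_⟩
  have hB : ‖betaIntegral (w - h) h‖ ≤ J := by
    refine intervalIntegral.norm_integral_le_of_norm_le zero_le_one
      (.of_forall fun x hx ↦ ?_) hint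
    rw [norm_mul, norm_cpow_eq_rpow_re_of_pos hx.1]
    refine mul_le_of_le_one_left (norm_nonneg _) ?_
    refine Real.rpow_le_one hx.1.le hx.2 ?_
    simp
    linarith
  have key := Gamma_mul_Gamma_eq_betaIntegral (s := w - h) (t := h)
    (by simp; linarith) (by simpa using hh)
  rw [sub_add_cancel] at key
  have := congrArg norm key
  rw [norm_mul, norm_mul] at this
  rw [div_mul_eq_mul_div, le_div_iff₀ hGpos, this, mul_comm]
  gcongr
  linarith

/-- On `Re s ≥ 2`, both `ζ` and `1 / ζ` are bounded by their absolutely convergent Dirichlet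
series. -/
lemma zeta_two_sided : ∃ Z : ℝ, 0 < Z ∧ ∀ s : ℂ, 2 ≤ s.re →
    ‖riemannZeta s‖ ≤ Z ∧ 1 ≤ Z * ‖riemannZeta s‖ := by
  have hb (f : ℕ → ℂ) (hf : LSeriesSummable f 2) :
      ∃ B : ℝ, ∀ s : ℂ, 2 ≤ s.re → ‖LSeries f s‖ ≤ B := by
    refine ⟨∑' n, ‖LSeries.term f 2 n‖, fun s hs ↦ ?_⟩
    exact tsum_of_norm_bounded hf.norm.hasSum
      fun n ↦ LSeries.norm_term_le_of_re_le_re f (by simpa using hs) n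
  obtain ⟨B₁, h₁⟩ := hb 1 (LSeriesSummable_one_iff.mpr (by simp))
  obtain ⟨B₂, h₂⟩ := hb _ (ArithmeticFunction.LSeriesSummable_moebius_iff.mpr
    (show 1 < (2 : ℂ).re by simp))
  refine ⟨|B₁| + |B₂| + 1, by positivity, fun s hs ↦ ?_⟩
  have hs1 : 1 < s.re := by linarith
  have e := LSeries_one_mul_Lseries_moebius hs1
  have h₁ := h₁ s hs
  have h₂ := h₂ s hs
  rw [LSeries_one_eq_riemannZeta hs1] at e h₁
  constructor
  · linarith [le_abs_self B₁, abs_nonneg B₂]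
  · have e' := congrArg norm e
    rw [norm_mul, norm_one, mul_comm] at e'
    rw [← e']
    refine mul_le_mul_of_nonneg_right ?_ (norm_nonneg _)
    linarith [le_abs_self B₂, abs_nonneg B₁]

/-- The reflection formula gives `|Γ(1/2 + iy)|² = π / cosh (π y)`, hence exponential decay at
worst; one step of the recurrence leads to `Γ(3/2 + iy)`. -/
lemma norm_Gamma_lower (y : ℝ) :
    Real.exp (-(4 * (1 + |y|))) ≤ ‖Gamma (3 / 2 + y * I)‖ := by
  set z : ℂ := 1 / 2 + y * I with hz
  have hz0 : z ≠ 0 := fun h ↦ by simpa [hz] using congrArg re h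
  have h1z : 1 - z = starRingEnd ℂ z := by
    apply Complex.ext
    · simp [hz]; norm_num
    · simp [hz]
  have hsin : ‖sin (Real.pi * z)‖ ≤ Real.exp (Real.pi * |y|) := by
    have hi : (Real.pi * z).im = Real.pi * y := by simp [hz]
    rw [sin, norm_div, norm_mul, norm_I, mul_one]
    have h1 : ‖exp (-(Real.pi * z) * I)‖ ≤ Real.exp (Real.pi * |y|) := by
      rw [norm_exp, Real.exp_le_exp]
      have : (-(Real.pi * z) * I).re = Real.pi * y := by
        rw [mul_I_re]; rw [neg_im, neg_neg]; exact hi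
      rw [this]
      gcongr
      exact le_abs_self y
    have h2 : ‖exp ((Real.pi * z) * I)‖ ≤ Real.exp (Real.pi * |y|) := by
      rw [norm_exp, Real.exp_le_exp, mul_I_re, hi, ← mul_neg]
      gcongr
      exact neg_le_abs y
    have := norm_sub_le (exp (-(Real.pi * z) * I)) (exp ((Real.pi * z) * I))
    rw [RCLike.norm_ofNat]
    linarith
  have hrefl := congrArg norm (Gamma_mul_Gamma_one_sub z)
  rw [h1z, Gamma_conj, norm_mul, norm_conj, norm_div] at hrefl
  have hpi : ‖(Real.pi : ℂ)‖ = Real.pi := by simp [Real.pi_pos.le]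
  rw [hpi] at hrefl
  have hGpos : 0 < ‖Gamma z‖ := norm_pos_iff.mpr (Gamma_ne_zero_of_re_pos (by simp [hz]))
  have hsinpos : 0 < ‖sin (Real.pi * z)‖ := by
    by_contra hcon
    have : ‖sin (Real.pi * z)‖ = 0 := le_antisymm (not_lt.mp hcon) (norm_nonneg _)
    rw [this, div_zero] at hrefl
    nlinarith
  have hsq : Real.exp (-(2 * |y|)) ^ 2 ≤ ‖Gamma z‖ ^ 2 := by
    rw [sq ‖Gamma z‖, hrefl, le_div_iff₀ hsinpos, ← Real.exp_nat_mul]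
    calc _ ≤ Real.exp ((2 : ℕ) * -(2 * |y|)) * Real.exp (Real.pi * |y|) := by gcongr
      _ ≤ 1 := by
        rw [← Real.exp_add, Real.exp_le_one_iff]
        push_cast
        nlinarith [Real.pi_lt_four, abs_nonneg y]
      _ ≤ Real.pi := by linarith [Real.pi_gt_three]
  have hle : Real.exp (-(2 * |y|)) ≤ ‖Gamma z‖ :=
    (pow_le_pow_iff_left₀ (Real.exp_pos _).le hGpos.le two_ne_zero).mp hsq
  have e : (3 / 2 + y * I : ℂ) = z + 1 := by rw [hz]; ring
  rw [e, Gamma_add_one _ hz0, norm_mul]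
  have hzn : Real.exp (-4) ≤ ‖z‖ := by
    have h1 : (1 / 2 : ℝ) ≤ ‖z‖ := by
      have hr : z.re = 1 / 2 := by simp [hz]
      have := re_le_norm z
      rwa [hr] at this
    have h2 : Real.exp (-4) ≤ 1 / 2 := by
      rw [Real.exp_neg, one_div]
      gcongr
      linarith [Real.add_one_le_exp (4 : ℝ)]
    linarith
  calc _ ≤ Real.exp (-4) * Real.exp (-(2 * |y|)) := by
        rw [← Real.exp_add, Real.exp_le_exp]; linarith [abs_nonneg y]
    _ ≤ _ := by gcongr

/-! ### Monotonicity of `|ξ|` to the right of the critical line -/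

lemma norm_Gammaℝ (s : ℂ) : ‖Gammaℝ s‖ = Real.pi ^ (-s.re / 2) * ‖Gamma (s / 2)‖ := by
  rw [Gammaℝ_def, norm_mul, norm_cpow_eq_rpow_re_of_pos Real.pi_pos]
  simp

/-- Under the Riemann hypothesis `ξ` decays at most exponentially on the strip `a ≤ Re s ≤ 3` with
`a > 1 / 2`. The bound is immediate on `Re s = 3`, and `norm_lower_of_ne_zero` carries it to the
left in discs about `3 + it` that touch the critical line. -/
lemma riemannXi_lower (hRH : RiemannHypothesis) {a : ℝ} (ha : 1 / 2 < a) (ha3 : a ≤ 3) :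
    ∃ C : ℝ, 0 < C ∧ ∀ s : ℂ, a ≤ s.re → s.re ≤ 3 →
      Real.exp (-(C * (1 + |s.im|))) ≤ ‖riemannXi s‖ := by
  obtain ⟨A, hA, hup⟩ := riemannXi_upper (1 / 2) (11 / 2)
  obtain ⟨Z, hZ, hzeta⟩ := zeta_two_sided
  set κ : ℝ := Real.pi ^ (-(3 : ℝ) / 2) / Z with hκ
  have hκpos : 0 < κ := div_pos (Real.rpow_pos_of_pos Real.pi_pos _) hZ
  set E := 4 + |Real.log κ| with hE
  have hEpos : 0 < E := by positivity
  have ha' : 0 < a - 1 / 2 := by linarith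
  have ha3' : 0 ≤ 3 - a := by linarith
  refine ⟨E + 2 * (4 * A + E) * (3 - a) / (a - 1 / 2), by positivity, fun s has hs3 ↦ ?_⟩
  set t := s.im with ht
  have hT : 0 < 1 + |t| := by positivity
  set c : ℂ := 3 + t * I with hc
  have hcre : c.re = 3 := by simp [hc]
  have hcim : c.im = t := by simp [hc]
  have hV : Real.exp (-(E * (1 + |t|))) ≤ ‖riemannXi c‖ := by
    have hc1 : c ≠ 1 := fun h ↦ by rw [h] at hcre; norm_num at hcre
    rw [riemannXi_eq (by rw [hcre]; norm_num) hc1, norm_mul, norm_mul, norm_mul, norm_Gammaℝ, hcre]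
    have h1 : 1 ≤ ‖c‖ := by
      have := re_le_norm c
      rw [hcre] at this; linarith
    have h2 : 1 ≤ ‖c - 1‖ := by
      have := re_le_norm (c - 1)
      rw [sub_re, hcre, one_re] at this; linarith
    have h3 : 1 / Z ≤ ‖riemannZeta c‖ := by
      rw [div_le_iff₀' hZ]
      exact (hzeta c (by rw [hcre]; norm_num)).2
    have h4 : Real.exp (-(4 * (1 + |t|))) ≤ ‖Gamma (c / 2)‖ := by
      have e : c / 2 = 3 / 2 + ((t / 2 : ℝ) : ℂ) * I := by rw [hc]; push_cast; ring
      rw [e]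
      refine le_trans ?_ (norm_Gamma_lower (t / 2))
      rw [Real.exp_le_exp, abs_div, abs_two]
      linarith [abs_nonneg t]
    have h5 : Real.exp (-(|Real.log κ| * (1 + |t|))) ≤ κ := by
      calc _ ≤ Real.exp (Real.log κ) := by
            rw [Real.exp_le_exp]
            nlinarith [neg_abs_le (Real.log κ), abs_nonneg (Real.log κ), abs_nonneg t]
        _ = κ := Real.exp_log hκpos
    calc Real.exp (-(E * (1 + |t|)))
        = 1 * 1 * (Real.exp (-(|Real.log κ| * (1 + |t|))) * Real.exp (-(4 * (1 + |t|)))) := by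
          rw [← Real.exp_add, hE]; ring_nf
      _ ≤ 1 * 1 * (κ * Real.exp (-(4 * (1 + |t|)))) := by gcongr
      _ = 1 * 1 * (Real.pi ^ (-(3 : ℝ) / 2) * Real.exp (-(4 * (1 + |t|))) * (1 / Z)) := by
          rw [hκ]; ring
      _ ≤ _ := by gcongr
  have hball {z : ℂ} (hz : z ∈ Metric.ball c (5 / 2)) :
      1 / 2 < z.re ∧ z.re ≤ 11 / 2 ∧ |z.im| ≤ |t| + 5 / 2 := by
    rw [Metric.mem_ball, dist_eq] at hz
    have h1 := (abs_re_le_norm (z - c)).trans hz.le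
    have h1' := (abs_re_le_norm (z - c)).trans_lt hz
    have h2 := (abs_im_le_norm (z - c)).trans hz.le
    rw [sub_re, hcre, abs_le] at h1
    rw [sub_re, hcre, abs_lt] at h1'
    rw [sub_im, hcim] at h2
    refine ⟨by linarith, by linarith, ?_⟩
    have := abs_add_le (z.im - t) t
    rw [sub_add_cancel] at this
    linarith
  have hdist : ‖s - c‖ ≤ 3 - a := by
    have : s - c = ((s.re - 3 : ℝ) : ℂ) := by
      apply Complex.ext <;> simp [hcre, hcim, ht]
    rw [this, norm_real, Real.norm_eq_abs, abs_le]
    constructor <;> linarith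
  have := norm_lower_of_ne_zero differentiable_riemannXi (c := c) (r := 3 - a) (R := 5 / 2)
    (U := 4 * A * (1 + |t|)) (V := E * (1 + |t|)) ha3' (by linarith)
    (fun z hz ↦ riemannXi_ne_zero hRH (hball hz).1)
    (fun z hz ↦ by
      obtain ⟨h1, h2, h3⟩ := hball hz
      refine (hup z h1.le h2).trans ?_
      rw [Real.exp_le_exp]
      nlinarith [abs_nonneg t])
    hV (by positivity) hdist
  refine le_trans (le_of_eq ?_) this
  congr 2
  rw [show (5 / 2 - (3 - a) : ℝ) = a - 1 / 2 by ring]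
  field_simp

/-- Far to the right, a negative real shift does not enlarge `ξ` by more than a constant factor. -/
lemma norm_riemannXi_sub_le {δ : ℝ} (hδ : 0 < δ) (hδ1 : δ < 1) :
    ∃ K : ℝ, 0 < K ∧ ∀ s : ℂ, 3 ≤ s.re → ‖riemannXi (s - δ)‖ ≤ K * ‖riemannXi s‖ := by
  obtain ⟨K, hK, hGamma⟩ := norm_Gamma_sub_le (h := δ / 2) (by positivity)
  obtain ⟨Z, hZ, hzeta⟩ := zeta_two_sided
  have hpi := Real.pi_pos
  refine ⟨Real.pi ^ (δ / 2) * K * (Z * Z), by positivity, fun s hs ↦ ?_⟩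
  have hre : (s - δ).re = s.re - δ := by simp
  have him : (s - δ).im = s.im := by simp
  have h1 : s ≠ 1 := fun h ↦ by rw [h, one_re] at hs; norm_num at hs
  have h1' : s - δ ≠ 1 := fun h ↦ by
    have := congrArg re h
    rw [hre, one_re] at this
    linarith
  rw [riemannXi_eq (by linarith) h1, riemannXi_eq (by linarith) h1']
  simp only [norm_mul, norm_Gammaℝ, hre]
  have n1 : ‖s - δ‖ ≤ ‖s‖ := by
    rw [← sq_le_sq₀ (norm_nonneg _) (norm_nonneg _), Complex.sq_norm, Complex.sq_norm, normSq_apply,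
      normSq_apply, hre, him]
    nlinarith
  have n2 : ‖s - δ - 1‖ ≤ ‖s - 1‖ := by
    rw [← sq_le_sq₀ (norm_nonneg _) (norm_nonneg _), Complex.sq_norm, Complex.sq_norm, normSq_apply,
      normSq_apply]
    simp only [sub_re, sub_im, ofReal_re, ofReal_im, one_re, one_im]
    nlinarith
  have n3 : Real.pi ^ (-(s.re - δ) / 2) = Real.pi ^ (δ / 2) * Real.pi ^ (-s.re / 2) := by
    rw [← Real.rpow_add hpi]; ring_nf
  have n4 : ‖Gamma ((s - δ) / 2)‖ ≤ K * ‖Gamma (s / 2)‖ := by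
    have e : (s - δ) / 2 = s / 2 - ((δ / 2 : ℝ) : ℂ) := by push_cast; ring
    rw [e]
    refine hGamma (s / 2) ?_
    simp
    linarith
  have n5 : ‖riemannZeta (s - δ)‖ ≤ Z * Z * ‖riemannZeta s‖ := by
    have := (hzeta (s - δ) (by linarith)).1
    have := (hzeta s (by linarith)).2
    nlinarith
  rw [n3]
  calc _ ≤ ‖s‖ * ‖s - 1‖ * (Real.pi ^ (δ / 2) * Real.pi ^ (-s.re / 2) * (K * ‖Gamma (s / 2)‖) *
        (Z * Z * ‖riemannZeta s‖)) := by gcongr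
    _ = _ := by ring

/-- Under the Riemann hypothesis, `ξ(s - δ) / ξ(s)` is holomorphic for `Re s ≥ (1 + δ) / 2` and of
modulus one on the boundary by the functional equation, so Phragmén–Lindelöf bounds it by one. -/
lemma riemannXi_shift_le (hRH : RiemannHypothesis) {δ : ℝ} (hδ : 0 < δ) (hδ1 : δ < 1) {s : ℂ}
    (hs : (1 + δ) / 2 ≤ s.re) : ‖riemannXi (s - δ)‖ ≤ ‖riemannXi s‖ := by
  set a : ℝ := (1 + δ) / 2 with ha
  have hne {z : ℂ} (hz : a ≤ z.re) : riemannXi z ≠ 0 :=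
    riemannXi_ne_zero hRH (by linarith)
  obtain ⟨A, hA, hup⟩ := riemannXi_upper 0 3
  obtain ⟨C, hC, hlow⟩ := riemannXi_lower hRH (a := a) (by linarith) (by linarith)
  obtain ⟨K, hK, hright⟩ := norm_riemannXi_sub_le hδ hδ1
  -- growth of the quotient on the whole half-plane
  have hgrow : ∃ B : ℝ, 0 < B ∧ ∀ z : ℂ, a ≤ z.re →
      ‖riemannXi (z - δ) / riemannXi z‖ ≤ Real.exp (B * (1 + |z.im|)) := by
    refine ⟨A + C + |Real.log K|, by positivity, fun z hz ↦ ?_⟩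
    have hpos : 0 < ‖riemannXi z‖ := norm_pos_iff.mpr (hne hz)
    rw [norm_div, div_le_iff₀ hpos]
    rcases le_total z.re 3 with h3 | h3
    · have h1 := hup (z - δ) (by simp; linarith) (by simp; linarith)
      have h2 := hlow z hz h3
      have him : (z - δ).im = z.im := by simp
      rw [him] at h1
      calc _ ≤ Real.exp (A * (1 + |z.im|)) := h1
        _ ≤ Real.exp ((A + C + |Real.log K|) * (1 + |z.im|)) * Real.exp (-(C * (1 + |z.im|))) := by
          rw [← Real.exp_add, Real.exp_le_exp]
          have : 0 ≤ |Real.log K| * (1 + |z.im|) := by positivity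
          linarith
        _ ≤ _ := by gcongr
    · refine (hright z h3).trans ?_
      gcongr
      calc K = Real.exp (Real.log K) := (Real.exp_log hK).symm
        _ ≤ _ := by
          rw [Real.exp_le_exp]
          nlinarith [le_abs_self (Real.log K), abs_nonneg (Real.log K), abs_nonneg z.im,
            mul_nonneg (abs_nonneg (Real.log K)) (abs_nonneg z.im),
            mul_nonneg (add_pos hA hC).le (abs_nonneg z.im)]
  obtain ⟨B, hB, hgrow⟩ := hgrow
  set f : ℂ → ℂ := fun z ↦ riemannXi (a + z - δ) / riemannXi (a + z) with hf
  have hre (z : ℂ) : ((a : ℂ) + z).re = a + z.re := by simp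
  have him (z : ℂ) : ((a : ℂ) + z).im = z.im := by simp
  have hxi := differentiable_riemannXi
  have hfd {z : ℂ} (hz : 0 ≤ z.re) : DifferentiableAt ℂ f z := by
    have h1 : Differentiable ℂ fun z : ℂ ↦ riemannXi (a + z - δ) := by fun_prop
    have h2 : Differentiable ℂ fun z : ℂ ↦ riemannXi (a + z) := by fun_prop
    exact (h1 z).div (h2 z) (hne (by rw [hre]; linarith))
  have hcl : closure {z : ℂ | 0 < z.re} = {z : ℂ | 0 ≤ z.re} := closure_setOfPred_lt_re 0
  have hd : DiffContOnCl ℂ f {z | 0 < z.re} := by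
    refine DifferentiableOn.diffContOnCl fun z hz ↦ ?_
    rw [hcl] at hz
    exact (hfd hz).differentiableWithinAt
  have hmain := PhragmenLindelof.right_half_plane_of_bounded_on_real (f := f) (C := 1)
    (z := s - a) hd ?_ ?_ ?_ (by simpa using hs)
  · have e : (a : ℂ) + (s - a) = s := by ring
    rw [hf] at hmain
    simp only [e, norm_div] at hmain
    rwa [div_le_one (norm_pos_iff.mpr (hne hs))] at hmain
  · refine ⟨1, by norm_num, B, ?_⟩
    refine Asymptotics.IsBigO.of_bound (Real.exp B) ?_
    refine Filter.eventually_inf_principal.mpr (.of_forall fun z hz ↦ ?_)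
    have hz : 0 < z.re := hz
    refine (hgrow (a + z) (by rw [hre]; linarith)).trans ?_
    rw [him, Real.rpow_one, Real.norm_eq_abs, abs_of_pos (Real.exp_pos _), ← Real.exp_add,
      Real.exp_le_exp]
    nlinarith [abs_im_le_norm z]
  · refine ⟨Real.exp B, ?_⟩
    rw [Filter.eventually_map]
    filter_upwards [Filter.eventually_ge_atTop (0 : ℝ)] with x hx
    have := hgrow (a + x) (by rw [hre, ofReal_re]; linarith)
    rwa [him, ofReal_im, abs_zero, add_zero, mul_one] at this
  · intro y
    -- the shifted point is the reflection of `a + iy` in the critical line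
    have e : (a : ℂ) + y * I - δ = 1 - starRingEnd ℂ (a + y * I) := by
      apply Complex.ext
      · simp
        linarith
      · simp
    have hare : ((a : ℂ) + y * I).re = a := by simp
    have hne1 : (a : ℂ) + y * I ≠ 1 := fun h ↦ by
      have := congrArg re h
      rw [hare, one_re] at this
      linarith
    simp only [hf]
    rw [e, riemannXi_one_sub, norm_div, norm_riemannXi_conj (by rw [hare]; linarith) hne1]
    exact div_self_le_one _

/-- The quantity is half the derivative of `|ξ|²` in the real direction; it is nonnegative because
`|ξ(s - δ)| ≤ |ξ(s)|` for small `δ > 0`. -/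
lemma re_deriv_riemannXi_nonneg (hRH : RiemannHypothesis) {s : ℂ} (hs : 1 / 2 ≤ s.re) :
    0 ≤ (starRingEnd ℂ (riemannXi s) * deriv riemannXi s).re := by
  have hxi := differentiable_riemannXi
  have hmain : ∀ x : ℝ, 1 / 2 < x →
      0 ≤ (starRingEnd ℂ (riemannXi (x + s.im * I)) * deriv riemannXi (x + s.im * I)).re := by
    intro x hx
    set z : ℂ := x + s.im * I with hz
    have hzre : z.re = x := by simp [hz]
    -- the squared modulus along the horizontal line, as a function of the shift to the left
    have h1 : HasDerivAt (fun δ : ℝ ↦ riemannXi (z - δ)) (-deriv riemannXi z) 0 := by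
      have h2 : HasDerivAt (fun w : ℂ ↦ riemannXi (z - w)) (-deriv riemannXi z) ((0 : ℝ) : ℂ) := by
        have := (hxi (z - ((0 : ℝ) : ℂ))).hasDerivAt.comp_const_sub z ((0 : ℝ) : ℂ)
        simpa using this
      exact h2.comp_ofReal
    have h3 := h1.norm_sq
    have e : 2 * inner ℝ (riemannXi (z - ((0 : ℝ) : ℂ))) (-deriv riemannXi z) =
        -(2 * (starRingEnd ℂ (riemannXi z) * deriv riemannXi z).re) := by
      rw [Complex.inner]
      simp
      ring
    rw [e] at h3
    by_contra hneg
    rw [not_le] at hneg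
    have hev : ∀ᶠ δ : ℝ in nhdsWithin 0 (Set.Ioi 0),
        ‖riemannXi (z - δ)‖ ^ 2 ≤ ‖riemannXi z‖ ^ 2 := by
      have hm : 0 < min 1 (2 * x - 1) := lt_min one_pos (by linarith)
      filter_upwards [Ioo_mem_nhdsGT hm] with δ hδ
      have := riemannXi_shift_le hRH hδ.1 (hδ.2.trans_le (min_le_left _ _)) (s := z)
        (by rw [hzre]; linarith [hδ.2.trans_le (min_le_right 1 (2 * x - 1))])
      gcongr
    have hslope := (hasDerivAt_iff_tendsto_slope.mp h3).mono_left
      (nhdsWithin_mono (s := Set.Ioi (0 : ℝ)) 0 fun y hy ↦ (Set.mem_Ioi.mp hy).ne')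
    have := le_of_tendsto hslope (b := 0) (by
      filter_upwards [hev, self_mem_nhdsWithin] with δ hδ hpos
      have hpos : 0 < δ := hpos
      rw [slope_def_field]
      refine div_nonpos_of_nonpos_of_nonneg ?_ (by linarith)
      simpa using hδ)
    linarith
  -- the critical line itself is reached by continuity
  have hcont : Continuous fun x : ℝ ↦
      (starRingEnd ℂ (riemannXi (x + s.im * I)) * deriv riemannXi (x + s.im * I)).re := by
    have h1 := hxi.continuous
    have h2 : Continuous (deriv riemannXi) := hxi.deriv.continuous
    have h3 : Continuous fun x : ℝ ↦ (x : ℂ) + s.im * I := by fun_prop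
    exact continuous_re.comp ((continuous_conj.comp (h1.comp h3)).mul (h2.comp h3))
  have hclosed : IsClosed {x : ℝ | 0 ≤
      (starRingEnd ℂ (riemannXi (x + s.im * I)) * deriv riemannXi (x + s.im * I)).re} :=
    isClosed_le continuous_const hcont
  have hmem : s.re ∈ closure (Set.Ioi (1 / 2 : ℝ)) := by
    rw [closure_Ioi]; exact hs
  have : 0 ≤ (starRingEnd ℂ (riemannXi (s.re + s.im * I)) *
      deriv riemannXi (s.re + s.im * I)).re :=
    closure_minimal (fun x (hx : 1 / 2 < x) ↦ hmain x hx) hclosed hmem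
  rwa [re_add_im] at this

/-- Positivity of `Re ξ'/ξ` on `Re s ≥ 1 / 2` under the Riemann hypothesis. It holds trivially at a
zero of `ξ`, where the quotient takes the junk value `0`. -/
lemma re_logDeriv_riemannXi_nonneg (hRH : RiemannHypothesis) {s : ℂ} (hs : 1 / 2 ≤ s.re) :
    0 ≤ (logDeriv riemannXi s).re := by
  have h := re_deriv_riemannXi_nonneg hRH hs
  have e : (logDeriv riemannXi s).re =
      (starRingEnd ℂ (riemannXi s) * deriv riemannXi s).re / normSq (riemannXi s) := by
    rw [logDeriv_apply, div_re, mul_re, conj_re, conj_im]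
    ring
  rw [e]
  exact div_nonneg h (normSq_nonneg _)

/-! ### The digamma function -/

/-- An upper bound for the real part of the logarithmic derivative of Euler's approximation
`n ^ z n! / (z (z + 1) ⋯ (z + n))` of `Γ(z)` at `z = u + iy`. The sum is compared with the
telescoping sum of the increments of `v ↦ log (v ^ 2 + y ^ 2) / 2`. -/
lemma log_sub_sum_le : ∃ S : ℝ, ∀ (n : ℕ) (u y : ℝ), 1 ≤ n → 1 / 4 ≤ u → u ≤ 3 / 2 →
    Real.log n - ∑ k ∈ Finset.range (n + 1), (u + k) / ((u + k) ^ 2 + y ^ 2) ≤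
      Real.log (1 + |y|) + S := by
  have hsum : Summable fun k : ℕ ↦ 8 * (1 / ((k : ℝ) + 1) ^ 2) := by
    refine Summable.mul_left 8 ?_
    have := (summable_nat_add_iff (f := fun k : ℕ ↦ 1 / (k : ℝ) ^ 2) 1).mpr
      (Real.summable_one_div_nat_pow.mpr one_lt_two)
    simpa using this
  refine ⟨1 + ∑' k : ℕ, 8 * (1 / ((k : ℝ) + 1) ^ 2), fun n u y hn hu hu' ↦ ?_⟩
  set ℓ : ℕ → ℝ := fun k ↦ Real.log ((u + k) ^ 2 + y ^ 2) / 2 with hℓ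
  have hterm (k : ℕ) : ℓ (k + 1) - ℓ k ≤
      (u + k) / ((u + k) ^ 2 + y ^ 2) + 8 * (1 / ((k : ℝ) + 1) ^ 2) := by
    have hk : (0 : ℝ) ≤ k := k.cast_nonneg
    set v := u + k with hv
    have hvpos : 0 < v := by positivity
    have hQ : 0 < v ^ 2 + y ^ 2 := by positivity
    have hQ' : 0 < (v + 1) ^ 2 + y ^ 2 := by positivity
    have h1 : ℓ (k + 1) - ℓ k = Real.log (((v + 1) ^ 2 + y ^ 2) / (v ^ 2 + y ^ 2)) / 2 := by
      rw [Real.log_div hQ'.ne' hQ.ne']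
      simp only [hℓ, hv]
      push_cast
      ring_nf
    have h2 := Real.log_le_sub_one_of_pos (div_pos hQ' hQ)
    have h3 : (((v + 1) ^ 2 + y ^ 2) / (v ^ 2 + y ^ 2) - 1) / 2 =
        v / (v ^ 2 + y ^ 2) + 1 / 2 * (1 / (v ^ 2 + y ^ 2)) := by
      field_simp
      ring
    have h4 : 1 / (v ^ 2 + y ^ 2) ≤ 16 * (1 / ((k : ℝ) + 1) ^ 2) := by
      rw [mul_one_div, div_le_div_iff₀ hQ (by positivity)]
      nlinarith [sq_nonneg y]
    linarith
  have htel := Finset.sum_le_sum fun k (_ : k ∈ Finset.range (n + 1)) ↦ hterm k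
  rw [Finset.sum_range_sub, Finset.sum_add_distrib] at htel
  have htail := hsum.sum_le_tsum (Finset.range (n + 1)) fun k _ ↦ by positivity
  have hn0 : (0 : ℝ) < n := by exact_mod_cast hn
  have hlow : Real.log n ≤ ℓ (n + 1) := by
    simp only [hℓ]
    rw [le_div_iff₀ two_pos, mul_comm, ← Nat.cast_two, ← Real.log_pow]
    refine Real.log_le_log (by positivity) ?_
    push_cast
    nlinarith [sq_nonneg y]
  have hup : ℓ 0 ≤ Real.log (1 + |y|) + 1 := by
    have hy : 0 < 1 + |y| := by positivity
    simp only [hℓ, Nat.cast_zero, add_zero]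
    have h1 : u ^ 2 + y ^ 2 ≤ (3 / 2 * (1 + |y|)) ^ 2 := by
      rw [← sq_abs y]
      nlinarith [abs_nonneg y]
    have h2 := Real.log_le_log (by positivity) h1
    rw [Real.log_pow, Real.log_mul (by norm_num) hy.ne'] at h2
    have h3 := Real.log_le_sub_one_of_pos (show (0 : ℝ) < 3 / 2 by norm_num)
    push_cast at h2
    linarith
  linarith

lemma norm_GammaSeq (u y : ℝ) (hu : 0 < u) {n : ℕ} (hn : 1 ≤ n) :
    ‖GammaSeq (u + y * I) n‖ = Real.exp (u * Real.log n + Real.log n.factorial -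
      ∑ k ∈ Finset.range (n + 1), Real.log ((u + k) ^ 2 + y ^ 2) / 2) := by
  have hn0 : (0 : ℝ) < n := by exact_mod_cast hn
  have hf : (0 : ℝ) < n.factorial := by exact_mod_cast n.factorial_pos
  rw [Real.exp_sub, Real.exp_add, Real.exp_log hf, Real.exp_sum, GammaSeq, norm_div, norm_mul,
    norm_prod, norm_natCast, mul_comm u, ← Real.rpow_def_of_pos hn0, ← ofReal_natCast n,
    norm_cpow_eq_rpow_re_of_pos hn0]
  congr 1
  · simp
  · refine Finset.prod_congr rfl fun k _ ↦ ?_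
    have hk : (0 : ℝ) ≤ k := k.cast_nonneg
    have h1 : 0 < (u + k) ^ 2 + y ^ 2 := by positivity
    rw [← Real.log_sqrt h1.le, Real.exp_log (Real.sqrt_pos.mpr h1), Complex.norm_def, normSq_apply]
    congr 1
    simp
    ring

/-- The upper half of Stirling's formula for the digamma function, with a bounded error. It follows
from the Euler limit formula and the mean value inequality. -/
lemma re_logDeriv_Gamma_le : ∃ S : ℝ, ∀ w : ℂ, 1 / 4 ≤ w.re → w.re ≤ 1 / 2 →
    (logDeriv Gamma w).re ≤ Real.log (1 + |w.im|) + S := by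
  obtain ⟨S, hS⟩ := log_sub_sum_le
  refine ⟨S, fun w hw hw' ↦ ?_⟩
  set M := Real.log (1 + |w.im|) + S
  set x := w.re with hx
  set y := w.im with hy
  have hwxy : w = x + y * I := (re_add_im w).symm
  have hseq (n : ℕ) (hn : 1 ≤ n) (h : ℝ) (h0 : 0 ≤ h) (h1 : h ≤ 1) :
      ‖GammaSeq (w + h) n‖ ≤ Real.exp (M * h) * ‖GammaSeq w n‖ := by
    have e : w + h = ((x + h : ℝ) : ℂ) + y * I := by rw [hwxy]; push_cast; ring
    rw [e, hwxy, norm_GammaSeq _ _ (by linarith) hn, norm_GammaSeq _ _ (by linarith) hn,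
      ← Real.exp_add, Real.exp_le_exp]
    set g : ℝ → ℝ := fun u ↦ u * Real.log n + Real.log n.factorial -
      ∑ k ∈ Finset.range (n + 1), Real.log ((u + k) ^ 2 + y ^ 2) / 2 with hg
    have hder (u : ℝ) (hu : 1 / 4 ≤ u) : HasDerivAt g
        (Real.log n - ∑ k ∈ Finset.range (n + 1), (u + k) / ((u + k) ^ 2 + y ^ 2)) u := by
      refine HasDerivAt.sub ?_ (HasDerivAt.fun_sum fun k _ ↦ ?_)
      · simpa using ((hasDerivAt_id u).mul_const (Real.log n)).add_const (Real.log n.factorial)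
      · have hk : (0 : ℝ) ≤ k := k.cast_nonneg
        have hpos : (u + k) ^ 2 + y ^ 2 ≠ 0 := by positivity
        have h1 : HasDerivAt (fun u : ℝ ↦ (u + k) ^ 2 + y ^ 2) (2 * (u + k)) u := by
          simpa using (((hasDerivAt_id u).add_const (k : ℝ)).pow 2).add_const (y ^ 2)
        refine ((h1.log hpos).div_const 2).congr_deriv ?_
        field_simp
    have := (convex_Icc (1 / 4 : ℝ) (3 / 2)).image_sub_le_mul_sub_of_deriv_le (f := g) (C := M)
      (fun u hu ↦ (hder u hu.1).continuousAt.continuousWithinAt)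
      (fun u hu ↦ (hder u (interior_subset hu).1).differentiableAt.differentiableWithinAt)
      (fun u hu ↦ by
        have hu := interior_subset hu
        rw [(hder u hu.1).deriv]
        exact hS n u y hn hu.1 hu.2)
      x ⟨hw, by linarith⟩ (x + h) ⟨by linarith, by linarith⟩ (by linarith)
    rw [add_sub_cancel_left] at this
    simp only [hg] at this
    linarith
  have hlim (h : ℝ) (h0 : 0 ≤ h) (h1 : h ≤ 1) :
      ‖Gamma (w + h)‖ ≤ Real.exp (M * h) * ‖Gamma w‖ :=
    le_of_tendsto_of_tendsto (GammaSeq_tendsto_Gamma _).norm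
      ((GammaSeq_tendsto_Gamma _).norm.const_mul _)
      ((Filter.eventually_ge_atTop 1).mono fun n hn ↦ hseq n hn h h0 h1)
  have hG : Gamma w ≠ 0 := Gamma_ne_zero_of_re_pos (by linarith)
  have hpos : 0 < ‖Gamma w‖ := norm_pos_iff.mpr hG
  have hGd : DifferentiableAt ℂ Gamma w := differentiableAt_Gamma w fun m hm ↦ by
    have := congrArg re hm
    rw [neg_re, natCast_re] at this
    have : (0 : ℝ) ≤ m := m.cast_nonneg
    linarith
  -- differentiate `h ↦ ‖Γ (w + h) e ^ (-M h) / Γ w‖ ^ 2` at its one-sided maximum `h = 0`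
  have hd : HasDerivAt (fun h : ℝ ↦ Gamma (w + h) * exp (-(M * h)) / Gamma w)
      (logDeriv Gamma w - M) 0 := by
    have h1 : HasDerivAt (fun v : ℂ ↦ Gamma (w + v)) (deriv Gamma w) ((0 : ℝ) : ℂ) := by
      have h2 : HasDerivAt Gamma (deriv Gamma w) (w + ((0 : ℝ) : ℂ)) := by
        simpa using hGd.hasDerivAt
      exact h2.comp_const_add w _
    have h3 : HasDerivAt (fun v : ℂ ↦ exp (-(M * v))) (-(M : ℂ)) ((0 : ℝ) : ℂ) := by
      simpa using (((hasDerivAt_id ((0 : ℝ) : ℂ)).const_mul (M : ℂ)).neg).cexp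
    refine ((h1.mul h3).div_const (Gamma w)).comp_ofReal.congr_deriv ?_
    rw [logDeriv_apply]
    simp
    field_simp
    ring
  have hsq := hd.norm_sq
  have hslope := (hasDerivAt_iff_tendsto_slope.mp hsq).mono_left
      (nhdsWithin_mono (s := Set.Ioi (0 : ℝ)) 0 fun y hy ↦ (Set.mem_Ioi.mp hy).ne')
  have hle := le_of_tendsto hslope (b := 0) (by
    filter_upwards [Ioo_mem_nhdsGT (zero_lt_one' ℝ)] with h hh
    rw [slope_def_field]
    refine div_nonpos_of_nonpos_of_nonneg ?_ (by linarith [hh.1])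
    have h1 : ‖Gamma (w + h) * exp (-(M * h)) / Gamma w‖ ≤ 1 := by
      rw [norm_div, norm_mul, norm_exp, div_le_one hpos]
      have h2 := hlim h hh.1.le hh.2.le
      have e : (-((M : ℂ) * h)).re = -(M * h) := by simp
      rw [e, Real.exp_neg, ← div_eq_mul_inv, div_le_iff₀ (Real.exp_pos _), mul_comm]
      exact h2
    have h2 : ‖Gamma (w + h) * exp (-(M * h)) / Gamma w‖ ^ 2 ≤ 1 :=
      pow_le_one₀ (norm_nonneg _) h1
    simpa [hG] using h2)
  rw [Complex.inner] at hle
  simp [hG] at hle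
  linarith

/-! ### Logarithmic derivatives and the estimate -/

lemma logDeriv_Gammaℝ {s : ℂ} (hs : 0 < s.re) :
    logDeriv Gammaℝ s = -(Real.log Real.pi / 2 : ℝ) + logDeriv Gamma (s / 2) / 2 := by
  have hre : 0 < (s / 2).re := by simpa using hs
  have hpi : (Real.pi : ℂ) ≠ 0 := ofReal_ne_zero.mpr Real.pi_ne_zero
  have hG : Gamma (s / 2) ≠ 0 := Gamma_ne_zero_of_re_pos hre
  have hGd : DifferentiableAt ℂ Gamma (s / 2) := differentiableAt_Gamma _ fun m hm ↦ by
    rw [hm, neg_re, natCast_re] at hre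
    have : (0 : ℝ) ≤ m := m.cast_nonneg
    linarith
  have h1 : HasDerivAt (fun z : ℂ ↦ (Real.pi : ℂ) ^ (-z / 2))
      ((Real.pi : ℂ) ^ (-s / 2) * log Real.pi * (-1 / 2)) s :=
    (((hasDerivAt_id s).neg).div_const 2).const_cpow (.inl hpi)
  have h2 : HasDerivAt (fun z : ℂ ↦ Gamma (z / 2)) (deriv Gamma (s / 2) * (1 / 2)) s :=
    hGd.hasDerivAt.comp s ((hasDerivAt_id s).div_const 2)
  have h3 : HasDerivAt Gammaℝ _ s := h1.mul h2
  have hp : (Real.pi : ℂ) ^ (-s / 2) ≠ 0 := by simp [cpow_eq_zero_iff, hpi]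
  rw [logDeriv_apply, h3.deriv, Gammaℝ_def, logDeriv_apply, ofReal_div, ofReal_log Real.pi_pos.le]
  push_cast
  field_simp

lemma logDeriv_riemannXi {s : ℂ} (hs : 0 < s.re) (h1 : s ≠ 1) (hz : riemannZeta s ≠ 0) :
    logDeriv riemannXi s = 1 / s + 1 / (s - 1) +
      (-(Real.log Real.pi / 2 : ℝ) + logDeriv Gamma (s / 2) / 2) +
      deriv riemannZeta s / riemannZeta s := by
  have h0 : s ≠ 0 := by rintro rfl; simp at hs
  have h2 : s - 1 ≠ 0 := sub_ne_zero.mpr h1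
  have hG : Gammaℝ s ≠ 0 := Gammaℝ_ne_zero_of_re_pos hs
  have hGd : DifferentiableAt ℂ Gammaℝ s := by
    have := (differentiable_Gammaℝ_inv s).inv (inv_ne_zero hG)
    exact this.congr_of_eventuallyEq (.of_forall fun z ↦ by simp)
  have hζ := differentiableAt_riemannZeta h1
  have hev : riemannXi =ᶠ[nhds s] fun z ↦ z * (z - 1) * (Gammaℝ z * riemannZeta z) := by
    filter_upwards [(isOpen_lt continuous_const continuous_re).mem_nhds hs, isOpen_ne.mem_nhds h1]
      with z hz hz1
    exact riemannXi_eq hz hz1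
  rw [logDeriv_apply, hev.deriv_eq, hev.eq_of_nhds, ← logDeriv_Gammaℝ hs, logDeriv_apply]
  have hd := (((hasDerivAt_id s).mul ((hasDerivAt_id s).sub_const 1)).mul
    (hGd.hasDerivAt.mul hζ.hasDerivAt)).deriv
  have hd' : deriv (fun z ↦ z * (z - 1) * (Gammaℝ z * riemannZeta z)) s = _ := hd
  rw [hd']
  simp
  field_simp
  ring

/-- Assuming RH: with `τ = |t| + 3`, the estimate
`−Re (ζ'/ζ)(σ+it) ≤ (1/2) log τ + O(1)` holds uniformly for `1/2 ≤ σ ≤ 1`,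
provided `σ + it` is neither `1` nor a zero of `ζ`. -/
theorem neg_re_logDeriv_zeta_upper_bound (hRH : RiemannHypothesis) :
    ∃ C : ℝ, ∀ σ t : ℝ, 1 / 2 ≤ σ → σ ≤ 1 →
      (σ + t * I : ℂ) ≠ 1 → riemannZeta (σ + t * I) ≠ 0 →
      -(deriv riemannZeta (σ + t * I) / riemannZeta (σ + t * I)).re ≤
        1 / 2 * Real.log (|t| + 3) + C := by
  obtain ⟨S, hS⟩ := re_logDeriv_Gamma_le
  refine ⟨2 + S / 2, fun σ t hσ hσ1 h1 hz ↦ ?_⟩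
  set s : ℂ := σ + t * I with hs
  have hre : s.re = σ := by simp [hs]
  have him : s.im = t := by simp [hs]
  have hspos : 0 < s.re := by linarith
  have hxi := re_logDeriv_riemannXi_nonneg hRH (s := s) (by linarith)
  rw [logDeriv_riemannXi hspos h1 hz] at hxi
  have hG := hS (s / 2) (by simp; linarith) (by simp; linarith)
  have hlog : Real.log (1 + |(s / 2).im|) ≤ Real.log (|t| + 3) := by
    refine Real.log_le_log (by positivity) ?_
    have : (s / 2).im = t / 2 := by simp [him]
    rw [this, abs_div, abs_two]
    linarith [abs_nonneg t]
  have hinv : (1 / s).re ≤ 2 := by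
    have h2 : 1 / 2 ≤ ‖s‖ := by linarith [re_le_norm s]
    refine (re_le_norm _).trans ?_
    rw [norm_div, norm_one, div_le_iff₀ (by linarith)]
    linarith
  -- the pole at `1` has a favourable sign because `σ ≤ 1`
  have hpole : (1 / (s - 1)).re ≤ 0 := by
    rw [one_div, inv_re]
    refine div_nonpos_of_nonpos_of_nonneg ?_ (normSq_nonneg _)
    rw [sub_re, one_re]
    linarith
  have hpi : 0 ≤ Real.log Real.pi := Real.log_nonneg (by linarith [Real.pi_gt_three])
  have hhalf : (logDeriv Gamma (s / 2) / 2).re = (logDeriv Gamma (s / 2)).re / 2 := by simp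
  rw [add_re, add_re, add_re, add_re, neg_re, ofReal_re, hhalf] at hxi
  linarith
end

section
/- Assume the Riemann Hypothesis and write τ = |t| + 3. Let 2 ≤ x ≤ τ², let λ₀ ≤ λ ≤ (log x)/4, and set σ_λ = 1/2 + λ/log x. Then, provided σ + it is neither 1 nor a zero of ζ(s) for σ in the relevant range, the inequality log|ζ(σ + it)| − log|ζ(σ_λ + it)| ≤ (σ_λ − 1/2)((1/2) log τ + O(1)) holds uniformly for 1/2 ≤ σ ≤ σ_λ. -/
/-!
Write `ξ(s) = s (s - 1) π^{-s/2} Γ(s/2) ζ(s)`, an entire function with `ξ(1 - s) = ξ(s)`. Under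
the Riemann Hypothesis `|ξ(σ + it)|` is a nondecreasing function of `σ ≥ 1/2`
(`norm_xiFn_sub_le_add`). Comparing the elementary factors of `ξ` at the two points `σ + it` and
`σ_λ + it` then gives the theorem: `|s - 1|` decreases to the right as long as `Re s ≤ 3/4`, the
factor `s` costs `O(σ_λ - σ)`, and the Gamma factor costs
`(σ_λ - σ) ((1/2) log τ + O(1))`.

The usual proof of the monotonicity goes through the Hadamard product. Here it is obtained from the
Phragmén–Lindelöf principle instead. For small `η > 0` the quotient
`ξ(z + 1/2 - η) / ξ(z + 1/2 + η)` is holomorphic in `Re z ≥ 0` by RH, has modulus `1` on the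
imaginary axis by the functional equation and `ξ(conj s) = conj ξ(s)`, and is bounded on the
positive real axis. It grows at most like `exp (C |z|)`: the quotient of Gamma factors is bounded
by the Beta integral (`exists_norm_Gamma_le`), the numerator `(s - 1) ζ(s)` grows polynomially
(`exists_norm_zetaReg_le`), and the denominator is bounded below by the Borel–Carathéodory theorem
(`exists_le_norm_zetaReg`). Hence the quotient has modulus at most `1`.

The comparison of Gamma factors, `norm_Gamma_add_le`, is derived from Euler's limit formula.
-/

open Complex

/-! ### The functions `ξ(s)` and `(s - 1) ζ(s)` -/

/-- Twice Riemann's `ξ`-function, `s (s - 1) π^{-s/2} Γ(s/2) ζ(s)`. It is written through the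
entire function `completedRiemannZeta₀`, whose relation to the completed zeta-function
`Λ(s) = Λ₀(s) - 1/s - 1/(1 - s)` turns `s (s - 1) Λ(s)` into the formula below; this also gives
the right values at `s = 0` and `s = 1`. -/
noncomputable def xiFn (s : ℂ) : ℂ := s * (s - 1) * completedRiemannZeta₀ s + 1

/-- The function `(s - 1) ζ(s)` with its removable singularity at `s = 1` filled in. Only values
with `0 < s.re` are used, where the denominator does not vanish. -/
noncomputable def zetaReg (s : ℂ) : ℂ := xiFn s / (s * Gammaℝ s)

lemma xiFn_one_sub (s : ℂ) : xiFn (1 - s) = xiFn s := by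
  unfold xiFn
  rw [completedRiemannZeta₀_one_sub]
  ring

lemma differentiable_xiFn : Differentiable ℂ xiFn := by
  unfold xiFn
  have := differentiable_completedZeta₀
  fun_prop

lemma ne_zero_of_re_pos' {s : ℂ} (hs : 0 < s.re) : s ≠ 0 := by
  rintro rfl
  simp at hs

lemma xiFn_eq_mul_zetaReg {s : ℂ} (hs : 0 < s.re) : xiFn s = s * Gammaℝ s * zetaReg s := by
  unfold zetaReg
  have h1 := ne_zero_of_re_pos' hs
  have h2 := Gammaℝ_ne_zero_of_re_pos hs
  field_simp

lemma zetaReg_eq {s : ℂ} (hs : 0 < s.re) (h1 : s ≠ 1) :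
    zetaReg s = (s - 1) * riemannZeta s := by
  have h0 := ne_zero_of_re_pos' hs
  have h2 := Gammaℝ_ne_zero_of_re_pos hs
  have h3 : s - 1 ≠ 0 := sub_ne_zero.mpr h1
  have h4 : 1 - s ≠ 0 := sub_ne_zero.mpr h1.symm
  rw [zetaReg, xiFn, riemannZeta_def_of_ne_zero h0, completedRiemannZeta_eq]
  field_simp
  ring

lemma zetaReg_one : zetaReg 1 = 1 := by
  simp [zetaReg, xiFn, Gammaℝ_one]

lemma differentiableAt_zetaReg {s : ℂ} (hs : 0 < s.re) : DifferentiableAt ℂ zetaReg s := by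
  have h0 := ne_zero_of_re_pos' hs
  have e : zetaReg = fun s => xiFn s * s⁻¹ * (Gammaℝ s)⁻¹ := by
    funext s; simp [zetaReg]; ring
  rw [e]
  exact ((differentiable_xiFn s).mul (differentiableAt_inv h0)).mul (differentiable_Gammaℝ_inv s)

open ComplexConjugate in
lemma Gammaℝ_conj (s : ℂ) : Gammaℝ (conj s) = conj (Gammaℝ s) := by
  have h0 : conj (2 : ℂ) = 2 := Complex.ext (by simp) (by simp)
  have h1 : -conj s / 2 = conj (-s / 2) := by rw [map_div₀, h0, map_neg]
  have h2 : conj s / 2 = conj (s / 2) := by rw [map_div₀, h0]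
  rw [Gammaℝ_def, Gammaℝ_def, map_mul, ← Gamma_conj, h1, h2,
    cpow_conj _ _ (by rw [arg_ofReal_of_nonneg Real.pi_pos.le]; exact Real.pi_pos.ne), conj_ofReal]

open ComplexConjugate in
lemma norm_xiFn_conj {s : ℂ} (hs : 0 < s.re) : ‖xiFn (conj s)‖ = ‖xiFn s‖ := by
  rcases eq_or_ne s 1 with rfl | h1
  · simp
  have h1' : conj s ≠ 1 := (map_ne_one_iff _ (starRingEnd ℂ).injective).mpr h1
  rw [xiFn_eq_mul_zetaReg hs, xiFn_eq_mul_zetaReg (s := conj s) (by simpa using hs),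
    zetaReg_eq hs h1, zetaReg_eq (by simpa using hs) h1', riemannZeta_conj, Gammaℝ_conj]
  have : conj s - 1 = conj (s - 1) := by simp
  rw [this]
  simp only [norm_mul, RCLike.norm_conj]

/-! ### Growth of `(s - 1) ζ(s)` -/

/-- The mean value inequality for `y ↦ y ^ (-s)` on `[n, n + 1]`. -/
lemma norm_cpow_sub_le {s : ℂ} (hs : 0 < s.re) {n : ℝ} (hn : 0 < n) {x : ℝ}
    (hx : x ∈ Set.Icc n (n + 1)) :
    ‖(x : ℂ) ^ (-s) - (n : ℂ) ^ (-s)‖ ≤ ‖s‖ * n ^ (-(s.re + 1)) := by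
  have h := norm_image_sub_le_of_norm_deriv_le_segment' (f := fun y : ℝ => (y : ℂ) ^ (-s))
    (f' := fun y : ℝ => -s * (y : ℂ) ^ (-s - 1)) (a := n) (b := n + 1)
    (C := ‖s‖ * n ^ (-(s.re + 1))) ?_ ?_ x hx
  · refine h.trans (mul_le_of_le_one_right (by positivity) (by linarith [hx.2]))
  · intro y hy
    have hy0 : 0 < y := hn.trans_le hy.1
    refine HasDerivAt.hasDerivWithinAt ?_
    have := (hasDerivAt_id (y : ℂ)).cpow_const (c := -s) (by simp [slitPlane, hy0])
    simpa using this.comp_ofReal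
  · intro y hy
    have hy0 : 0 < y := hn.trans_le hy.1
    rw [norm_mul, norm_neg, norm_cpow_eq_rpow_re_of_pos hy0]
    gcongr
    have : (-s - 1).re = -(s.re + 1) := by simp; ring
    rw [this]
    exact Real.rpow_le_rpow_of_nonpos hn hy.1 (by linarith)

/-- The `n`-th term of a series for `(s - 1) ζ(s) - 1`. With `m = n + 1` it equals
`(s - 1) (m ^ (-s) - ∫ y in m..m + 1, y ^ (-s))`, so it telescopes against the Dirichlet series
for `1 < s.re`, but is small enough to be summable for all `0 < s.re`. -/
noncomputable def zetaTerm (n : ℕ) (s : ℂ) : ℂ :=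
  (s - 1) * ((n + 1 : ℝ) : ℂ) ^ (-s) + ((n + 2 : ℝ) : ℂ) ^ (1 - s) - ((n + 1 : ℝ) : ℂ) ^ (1 - s)

lemma norm_zetaTerm_le {s : ℂ} (hs : 0 < s.re) (n : ℕ) :
    ‖zetaTerm n s‖ ≤ ‖s - 1‖ * ‖s‖ * (n + 1 : ℝ) ^ (-(s.re + 1)) := by
  set m : ℝ := n + 1 with hm
  have hm0 : 0 < m := by positivity
  have h := norm_image_sub_le_of_norm_deriv_le_segment'
    (f := fun y : ℝ => (s - 1) * (m : ℂ) ^ (-s) * (y : ℂ) + (y : ℂ) ^ (1 - s))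
    (f' := fun y : ℝ => (s - 1) * (m : ℂ) ^ (-s) + (1 - s) * (y : ℂ) ^ (-s)) (a := m) (b := m + 1)
    (C := ‖s - 1‖ * ‖s‖ * m ^ (-(s.re + 1))) ?_ ?_ (m + 1) (by simp)
  · have e : ((n + 2 : ℝ) : ℂ) = ((m + 1 : ℝ) : ℂ) := by rw [hm]; push_cast; ring
    simp only [add_sub_cancel_left, mul_one] at h
    refine le_trans (le_of_eq ?_) h
    rw [zetaTerm, e, ← hm]
    push_cast
    congr 1
    ring
  · intro y hy
    have hy0 : 0 < y := hm0.trans_le hy.1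
    refine HasDerivAt.hasDerivWithinAt ?_
    have h1 := ((hasDerivAt_id (y : ℂ)).cpow_const (c := 1 - s) (by simp [slitPlane, hy0]))
    have h2 := ((hasDerivAt_id (y : ℂ)).const_mul ((s - 1) * (m : ℂ) ^ (-s))).add h1
    have e : 1 - s - 1 = -s := by ring
    simpa [e] using h2.comp_ofReal
  · intro y hy
    have := norm_cpow_sub_le hs hm0 ⟨hy.1, hy.2.le⟩
    have e : (s - 1) * (m : ℂ) ^ (-s) + (1 - s) * (y : ℂ) ^ (-s) =
      -((s - 1) * ((y : ℂ) ^ (-s) - (m : ℂ) ^ (-s))) := by ring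
    rw [e, norm_neg, norm_mul, mul_assoc]
    gcongr

lemma differentiable_zetaTerm (n : ℕ) : Differentiable ℂ (zetaTerm n) := by
  have h1 : ((n + 1 : ℝ) : ℂ) ≠ 0 := by exact_mod_cast (by positivity : (n + 1 : ℝ) ≠ 0)
  have h2 : ((n + 2 : ℝ) : ℂ) ≠ 0 := by exact_mod_cast (by positivity : (n + 2 : ℝ) ≠ 0)
  have e1 : Differentiable ℂ (fun s : ℂ => ((n + 1 : ℝ) : ℂ) ^ (-s)) :=
    (differentiable_id.neg).const_cpow (Or.inl h1)
  have e2 : Differentiable ℂ (fun s : ℂ => ((n + 2 : ℝ) : ℂ) ^ (1 - s)) :=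
    (differentiable_id.const_sub 1).const_cpow (Or.inl h2)
  have e3 : Differentiable ℂ (fun s : ℂ => ((n + 1 : ℝ) : ℂ) ^ (1 - s)) :=
    (differentiable_id.const_sub 1).const_cpow (Or.inl h1)
  unfold zetaTerm
  exact (((differentiable_id.sub_const 1).mul e1).add e2).sub e3

lemma summable_rpow_shift {a : ℝ} (ha : 0 < a) :
    Summable (fun n : ℕ => (n + 1 : ℝ) ^ (-(a + 1))) := by
  have := (summable_nat_add_iff 1).mpr (Real.summable_nat_rpow (p := -(a + 1)).mpr (by linarith))
  simpa using this

/-- In the half-plane of absolute convergence, the second and third summands of `zetaTerm`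
telescope to `-1` and the first ones sum to `(s - 1) ζ(s)`. -/
lemma tsum_zetaTerm_of_one_lt_re {s : ℂ} (hs : 1 < s.re) :
    1 + ∑' n, zetaTerm n s = (s - 1) * riemannZeta s := by
  have hs0 : 0 < s.re := by linarith
  have hsum : Summable (fun n => zetaTerm n s) :=
    Summable.of_norm_bounded ((summable_rpow_shift hs0).mul_left (‖s - 1‖ * ‖s‖))
      (norm_zetaTerm_le hs0)
  have h1 := hsum.hasSum.tendsto_sum_nat
  have hz : Summable (fun n : ℕ => 1 / (n + 1 : ℂ) ^ s) := by
    have := (summable_nat_add_iff 1).mpr (Complex.summable_one_div_nat_cpow.mpr hs)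
    simpa using this
  have h2 := hz.hasSum.tendsto_sum_nat
  rw [← zeta_eq_tsum_one_div_nat_add_one_cpow hs] at h2
  have h3 : Filter.Tendsto (fun N : ℕ => ((N + 1 : ℝ) : ℂ) ^ (1 - s)) Filter.atTop (nhds 0) := by
    rw [tendsto_zero_iff_norm_tendsto_zero]
    have e : ∀ N : ℕ, ‖((N + 1 : ℝ) : ℂ) ^ (1 - s)‖ = (N + 1 : ℝ) ^ (-(s.re - 1)) := by
      intro N
      rw [norm_cpow_eq_rpow_re_of_pos (by positivity)]
      simp
    simp only [e]
    exact (tendsto_rpow_neg_atTop (by linarith)).comp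
      (Filter.tendsto_atTop_add_const_right _ 1 tendsto_natCast_atTop_atTop)
  have h4 := (((h2.const_mul (s - 1)).add h3).sub_const 1)
  have h5 : ∀ N : ℕ, ∑ n ∈ Finset.range N, zetaTerm n s =
      (s - 1) * ∑ n ∈ Finset.range N, 1 / (n + 1 : ℂ) ^ s + ((N + 1 : ℝ) : ℂ) ^ (1 - s) - 1 := by
    intro N
    induction N with
    | zero => simp
    | succ N ih =>
      rw [Finset.sum_range_succ, ih, Finset.sum_range_succ, zetaTerm, cpow_neg]
      push_cast
      ring_nf
  simp only [← h5] at h4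
  rw [tendsto_nhds_unique h1 h4]
  ring

/-- Analytic continuation of `tsum_zetaTerm_of_one_lt_re`. The bound `1 / 4` is any fixed positive
number below `3 / 8`: it keeps the convergence locally uniform. -/
lemma zetaReg_eq_tsum {s : ℂ} (hs : 1 / 4 < s.re) : zetaReg s = 1 + ∑' n, zetaTerm n s := by
  -- Compare both sides on a bounded convex region joining `s` to `2`.
  set R : ℝ := ‖s‖ + 4 with hR
  set U : Set ℂ := {z : ℂ | 1 / 4 < z.re} ∩ Metric.ball 0 R with hU
  have hUo : IsOpen U := (isOpen_lt continuous_const continuous_re).inter Metric.isOpen_ball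
  have hUc : Convex ℝ U := (convex_halfSpace_re_gt _).inter (convex_ball 0 R)
  have hR4 : 4 ≤ R := by rw [hR]; linarith [norm_nonneg s]
  have h2U : (2 : ℂ) ∈ U := by
    refine ⟨by norm_num, ?_⟩
    simp; linarith
  have hsU : s ∈ U := ⟨hs, by simp [hR]⟩
  have hd1 : DifferentiableOn ℂ zetaReg U := fun z hz =>
    (differentiableAt_zetaReg (by have := hz.1; simp at this; norm_num at *; linarith)).differentiableWithinAt
  have hd2 : DifferentiableOn ℂ (fun z => ∑' n, zetaTerm n z) U := by
    refine differentiableOn_tsum_of_summable_norm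
      (u := fun n : ℕ => (R + 1) * R * (n + 1 : ℝ) ^ (-((1 / 4 : ℝ) + 1)))
      ((summable_rpow_shift (by norm_num)).mul_left _)
      (fun n => (differentiable_zetaTerm n).differentiableOn) hUo ?_
    intro n z hz
    have hz1 : 1 / 4 < z.re := hz.1
    have hz2 : ‖z‖ ≤ R := by simpa using (mem_ball_zero_iff.mp hz.2).le
    have hz3 : ‖z - 1‖ ≤ R + 1 := (norm_sub_le _ _).trans (by simpa using hz2)
    refine (norm_zetaTerm_le (by linarith) n).trans ?_
    gcongr
    · linarith
  have key := (hd1.analyticOnNhd hUo).eqOn_of_preconnected_of_eventuallyEq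
    ((hd2.const_add 1).analyticOnNhd hUo) hUc.isPreconnected h2U ?_
  · exact key hsU
  · have : ∀ᶠ z : ℂ in nhds 2, 1 < z.re :=
      (isOpen_lt continuous_const continuous_re).mem_nhds (by norm_num)
    filter_upwards [this] with z hz
    rw [tsum_zetaTerm_of_one_lt_re hz, zetaReg_eq (by linarith)]
    rintro rfl
    simp at hz

/-- Polynomial growth of `(s - 1) ζ(s)`. The half-plane extends to the left of the critical line so
that it contains the points `s - η` with `1 / 2 ≤ s.re` and `η ≤ 1 / 8`. -/
lemma exists_norm_zetaReg_le : ∃ K : ℝ, 1 ≤ K ∧ ∀ s : ℂ, 3 / 8 ≤ s.re →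
    ‖zetaReg s‖ ≤ K * (1 + ‖s‖) ^ 2 := by
  have hS := summable_rpow_shift (a := 3 / 8) (by norm_num)
  set S := ∑' n : ℕ, (n + 1 : ℝ) ^ (-((3 / 8 : ℝ) + 1)) with hSdef
  have hS0 : 0 ≤ S := tsum_nonneg fun n => by positivity
  refine ⟨1 + S, by linarith, fun s hs => ?_⟩
  have hs0 : 0 < s.re := by linarith
  rw [zetaReg_eq_tsum (by linarith)]
  have h1 : ‖∑' n, zetaTerm n s‖ ≤ ‖s - 1‖ * ‖s‖ * S := by
    refine tsum_of_norm_bounded ((hS.hasSum).mul_left _) fun n => ?_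
    refine (norm_zetaTerm_le hs0 n).trans ?_
    gcongr
    · linarith
  have h2 : ‖s - 1‖ ≤ 1 + ‖s‖ := (norm_sub_le _ _).trans (by simp; linarith)
  have h3 := norm_nonneg s
  calc ‖1 + ∑' n, zetaTerm n s‖ ≤ 1 + ‖s - 1‖ * ‖s‖ * S := by
        refine (norm_add_le _ _).trans ?_
        simpa using h1
    _ ≤ 1 + (1 + ‖s‖) * (1 + ‖s‖) * S := by gcongr; linarith
    _ ≤ (1 + S) * (1 + ‖s‖) ^ 2 := by nlinarith [sq_nonneg ‖s‖]

/-- The tail is dominated by `∑_{n ≥ 2} n⁻² = π² / 6 - 1`. -/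
lemma norm_zeta_sub_one_le {s : ℂ} (hs : 2 ≤ s.re) : ‖riemannZeta s - 1‖ ≤ 2 / 3 := by
  have hz : Summable (fun n : ℕ => 1 / (n : ℂ) ^ s) := Complex.summable_one_div_nat_cpow.mpr (by linarith)
  have h0 := zeta_eq_tsum_one_div_nat_cpow (s := s) (by linarith)
  have hs0 : s ≠ 0 := ne_zero_of_re_pos' (by linarith)
  rw [← hz.sum_add_tsum_nat_add 2] at h0
  have h1 : riemannZeta s - 1 = ∑' n : ℕ, 1 / ((n + 2 : ℕ) : ℂ) ^ s := by
    rw [h0]; simp [Finset.sum_range_succ, hs0]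
  have hb := (hasSum_zeta_two)
  have hb2 := (hasSum_nat_add_iff' 2).mpr hb
  rw [h1]
  refine (tsum_of_norm_bounded hb2 fun n => ?_).trans ?_
  · rw [norm_div, norm_one, norm_natCast_cpow_of_pos (by positivity)]
    gcongr
    rw [← Real.rpow_natCast]
    exact Real.rpow_le_rpow_of_exponent_le (by push_cast; linarith [(n.cast_nonneg : (0:ℝ) ≤ n)]) (by simpa using hs)
  · simp [Finset.sum_range_succ]
    nlinarith [Real.pi_lt_d2, Real.pi_pos]

/-! ### Quotients of Gamma values -/

/-- Shifting to the right by a fixed `η` does not decrease `|Γ|` by more than a constant factor.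
This follows from `Γ(z) Γ(η) = B(z, η) Γ(z + η)`, since the Beta integral is bounded in terms of
the real part of `z` alone. -/
lemma exists_norm_Gamma_le {a η : ℝ} (ha : 0 < a) (hη : 0 < η) :
    ∃ K : ℝ, 0 ≤ K ∧ ∀ z : ℂ, a ≤ z.re → ‖Gamma z‖ ≤ K * ‖Gamma (z + η)‖ := by
  have hG : 0 < ‖Gamma (η : ℂ)‖ :=
    norm_pos_iff.mpr (Gamma_ne_zero_of_re_pos (by simpa using hη))
  have hconv := (betaIntegral_convergent (u := (a : ℂ)) (v := (η : ℂ)) (by simpa) (by simpa)).norm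
  refine ⟨(∫ x : ℝ in 0..1, ‖(x : ℂ) ^ ((a : ℂ) - 1) * (1 - (x : ℂ)) ^ ((η : ℂ) - 1)‖) /
    ‖Gamma (η : ℂ)‖, ?_, fun z hz => ?_⟩
  · exact div_nonneg (intervalIntegral.integral_nonneg zero_le_one fun _ _ => norm_nonneg _) hG.le
  have h := Gamma_mul_Gamma_eq_betaIntegral (s := z) (t := η) (by linarith) (by simpa)
  have hB : ‖betaIntegral z η‖ ≤
      ∫ x : ℝ in 0..1, ‖(x : ℂ) ^ ((a : ℂ) - 1) * (1 - (x : ℂ)) ^ ((η : ℂ) - 1)‖ := by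
    refine intervalIntegral.norm_integral_le_of_norm_le zero_le_one ?_ hconv
    refine Filter.Eventually.of_forall fun x hx => ?_
    rw [norm_mul, norm_mul, norm_cpow_eq_rpow_re_of_pos hx.1, norm_cpow_eq_rpow_re_of_pos hx.1]
    gcongr ?_ * _
    exact Real.rpow_le_rpow_of_exponent_ge hx.1 hx.2 (by simpa using hz)
  have h2 := congrArg norm h
  rw [norm_mul, norm_mul] at h2
  rw [div_mul_eq_mul_div, le_div_iff₀ hG, h2, mul_comm]
  gcongr

/-- One step of a lower bound for `∑ k, k / ((k + 2) ^ 2 + y ^ 2)`: each term exceeds the increment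
of `log ((k + 2) ^ 2 + y ^ 2) / 2`, up to an error whose sum telescopes to at most `5 / 2`. -/
lemma step_le {y δ : ℝ} (hδ0 : 0 ≤ δ) (k : ℕ) :
    δ * (1 / 2 * (Real.log ((k + 3) ^ 2 + y ^ 2) - Real.log ((k + 2) ^ 2 + y ^ 2))
      - 5 / 2 * (1 / (k + 1) - 1 / (k + 2))) ≤ δ * (k / ((k + 2) ^ 2 + y ^ 2)) := by
  have hk : (0 : ℝ) ≤ k := k.cast_nonneg
  gcongr
  have hp : 0 < ((k + 2) ^ 2 + y ^ 2 : ℝ) := by positivity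
  have hp3 : 0 < ((k + 3) ^ 2 + y ^ 2 : ℝ) := by positivity
  have h1 : Real.log ((k + 3) ^ 2 + y ^ 2) - Real.log ((k + 2) ^ 2 + y ^ 2) ≤
      (2 * k + 5) / ((k + 2) ^ 2 + y ^ 2) := by
    rw [← Real.log_div hp3.ne' hp.ne']
    refine (Real.log_le_sub_one_of_pos (by positivity)).trans (le_of_eq ?_)
    field_simp
    ring
  have h2 : 1 / ((k + 2) ^ 2 + y ^ 2 : ℝ) ≤ 1 / (k + 1) - 1 / (k + 2) := by
    rw [div_sub_div _ _ (by positivity) (by positivity), div_le_div_iff₀ hp (by positivity)]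
    nlinarith [sq_nonneg y]
  have e : (2 * k + 5) / ((k + 2) ^ 2 + y ^ 2 : ℝ) =
    2 * (k / ((k + 2) ^ 2 + y ^ 2)) + 5 * (1 / ((k + 2) ^ 2 + y ^ 2)) := by ring
  rw [e] at h1
  linarith

/-- The modulus of one factor of the quotient of the Euler products for `Γ(z + δ)` and `Γ(z)`. The
denominator `(k + 2) ^ 2 + y ^ 2` dominates `|z + δ + k| ^ 2` because `z.re + δ ≤ 2`. -/
lemma norm_div_le_exp {z : ℂ} {δ : ℝ} (h0 : 0 < z.re) (h1 : z.re ≤ 1) (hδ0 : 0 ≤ δ) (hδ1 : δ ≤ 1)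
    (k : ℕ) : ‖(z + k) / (z + δ + k)‖ ≤ Real.exp (-(δ * (k / ((k + 2) ^ 2 + z.im ^ 2)))) := by
  have hk : (0 : ℝ) ≤ k := k.cast_nonneg
  rw [← sq_le_sq₀ (norm_nonneg _) (Real.exp_pos _).le, ← Real.exp_nat_mul, norm_div, div_pow,
    Complex.sq_norm, Complex.sq_norm, normSq_apply, normSq_apply]
  simp only [add_re, add_im, natCast_re, natCast_im, ofReal_re, ofReal_im, add_zero]
  set a := z.re
  set y := z.im
  have hp : 0 < (a + δ + k) * (a + δ + k) + y * y := by nlinarith [mul_self_nonneg y]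
  have hq : 0 < ((k + 2) ^ 2 + y ^ 2 : ℝ) := by positivity
  refine le_trans ?_ (Real.add_one_le_exp _)
  have h3 : δ * (k / ((k + 2) ^ 2 + y ^ 2)) ≤ δ * (k / ((a + δ + k) * (a + δ + k) + y * y)) := by
    gcongr δ * (k / ?_)
    nlinarith
  have h4 : ((a + k) * (a + k) + y * y) / ((a + δ + k) * (a + δ + k) + y * y) ≤
      -2 * (δ * (k / ((a + δ + k) * (a + δ + k) + y * y))) + 1 := by
    rw [div_le_iff₀ hp]
    have : (-2 * (δ * (k / ((a + δ + k) * (a + δ + k) + y * y))) + 1) *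
      ((a + δ + k) * (a + δ + k) + y * y) = -2 * δ * k + ((a + δ + k) * (a + δ + k) + y * y) := by
      field_simp
    rw [this]
    nlinarith [mul_nonneg hδ0 h0.le, sq_nonneg δ]
  push_cast
  linarith

/-- Growth of Euler's approximants `n ^ z n! / (z (z + 1) ⋯ (z + n))` to `Γ(z)` under a real shift,
uniformly in `n`. -/
lemma GammaSeq_ratio {z : ℂ} {δ : ℝ} (h0 : 0 < z.re) (h1 : z.re ≤ 1) (hδ0 : 0 ≤ δ) (hδ1 : δ ≤ 1)
    {n : ℕ} (hn : n ≠ 0) : ‖GammaSeq (z + δ) n‖ ≤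
      Real.exp (δ * (1 / 2 * Real.log (4 + z.im ^ 2) + 5 / 2)) * ‖GammaSeq z n‖ := by
  have hn0 : (0 : ℝ) < n := by positivity
  have hz : ∀ k : ℕ, z + k ≠ 0 := fun k => ne_of_apply_ne re (by simp; positivity)
  have hz' : ∀ k : ℕ, z + δ + k ≠ 0 := fun k => ne_of_apply_ne re (by simp; positivity)
  -- The sum of `step_le` over `k < N`.
  have hsum : ∀ N : ℕ, δ * (1 / 2 * (Real.log ((N + 2) ^ 2 + z.im ^ 2) - Real.log (4 + z.im ^ 2))
      - 5 / 2 * (1 - 1 / (N + 1))) ≤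
      ∑ k ∈ Finset.range N, δ * (k / ((k + 2) ^ 2 + z.im ^ 2)) := by
    intro N
    induction N with
    | zero => norm_num
    | succ N ih =>
      rw [Finset.sum_range_succ]
      have := step_le (y := z.im) hδ0 N
      refine le_trans (le_of_eq ?_) (add_le_add ih this)
      push_cast
      ring_nf
  have hprod : ∏ k ∈ Finset.range (n + 1), ‖(z + k) / (z + δ + k)‖ ≤
      Real.exp (δ * (1 / 2 * Real.log (4 + z.im ^ 2) + 5 / 2) - δ * Real.log n) := by
    refine (Finset.prod_le_prod (fun _ _ => norm_nonneg _)
      fun k _ => norm_div_le_exp h0 h1 hδ0 hδ1 k).trans ?_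
    rw [← Real.exp_sum, Finset.sum_neg_distrib]
    gcongr
    have h := hsum (n + 1)
    have hlog : Real.log n ≤ 1 / 2 * Real.log (((n + 1 : ℕ) + 2) ^ 2 + z.im ^ 2) := by
      have : 2 * Real.log n ≤ Real.log (((n + 1 : ℕ) + 2) ^ 2 + z.im ^ 2) := by
        rw [← Nat.cast_two, ← Real.log_pow]
        apply Real.log_le_log (by positivity)
        push_cast
        nlinarith [sq_nonneg z.im]
      linarith
    have h5 : (0 : ℝ) ≤ 1 / ((n + 1 : ℕ) + 1) := by positivity
    have h6 := mul_le_mul_of_nonneg_left hlog hδ0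
    have h7 := mul_nonneg hδ0 h5
    linarith
  have e : GammaSeq (z + δ) n = (n : ℂ) ^ (δ : ℂ) *
      (∏ k ∈ Finset.range (n + 1), ((z + k) / (z + δ + k))) * GammaSeq z n := by
    rw [GammaSeq, GammaSeq, Finset.prod_div_distrib, cpow_add _ _ (by exact_mod_cast hn)]
    have hp1 : ∏ k ∈ Finset.range (n + 1), (z + k) ≠ 0 := Finset.prod_ne_zero_iff.mpr fun k _ => hz k
    have hp2 : ∏ k ∈ Finset.range (n + 1), (z + δ + k) ≠ 0 :=
      Finset.prod_ne_zero_iff.mpr fun k _ => hz' k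
    field_simp
  rw [e, norm_mul, norm_mul, norm_prod, norm_natCast_cpow_of_pos (by positivity), ofReal_re]
  gcongr ?_ * _
  calc (n : ℝ) ^ δ * ∏ k ∈ Finset.range (n + 1), ‖(z + k) / (z + δ + k)‖
      ≤ (n : ℝ) ^ δ * Real.exp (δ * (1 / 2 * Real.log (4 + z.im ^ 2) + 5 / 2) - δ * Real.log n) := by
        gcongr
    _ = _ := by
        rw [Real.rpow_def_of_pos hn0, ← Real.exp_add]
        ring_nf

/-- An upper bound of Stirling strength for `|Γ(z + δ) / Γ(z)|`, roughly `|z| ^ δ`, with explicit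
constants. -/
lemma norm_Gamma_add_le {z : ℂ} {δ : ℝ} (h0 : 0 < z.re) (h1 : z.re ≤ 1) (hδ0 : 0 ≤ δ)
    (hδ1 : δ ≤ 1) : ‖Gamma (z + δ)‖ ≤
      Real.exp (δ * (1 / 2 * Real.log (4 + z.im ^ 2) + 5 / 2)) * ‖Gamma z‖ := by
  refine le_of_tendsto_of_tendsto (GammaSeq_tendsto_Gamma _).norm
    ((GammaSeq_tendsto_Gamma _).norm.const_mul _) ?_
  filter_upwards [Filter.eventually_ne_atTop 0] with n hn
  exact GammaSeq_ratio h0 h1 hδ0 hδ1 hn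

/-! ### Lower bounds for `(s - 1) ζ(s)` under RH -/

/-- A nonvanishing holomorphic function on a disc has a holomorphic logarithm, normalised to vanish
at the centre. -/
lemma exists_log_of_ne_zero {f : ℂ → ℂ} {c : ℂ} {r : ℝ} (hr : 0 < r)
    (hf : DifferentiableOn ℂ f (Metric.ball c r)) (h0 : ∀ z ∈ Metric.ball c r, f z ≠ 0) :
    ∃ g : ℂ → ℂ, DifferentiableOn ℂ g (Metric.ball c r) ∧ g c = 0 ∧
      ∀ z ∈ Metric.ball c r, f z = f c * exp (g z) := by
  have hd : DifferentiableOn ℂ (fun z => deriv f z / f z) (Metric.ball c r) :=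
    (hf.deriv Metric.isOpen_ball).div hf h0
  obtain ⟨g₀, hg₀⟩ := hd.isExactOn_ball
  have hg : ∀ z ∈ Metric.ball c r, HasDerivAt (fun z => g₀ z - g₀ c) (deriv f z / f z) z :=
    fun z hz => (hg₀ z hz).sub_const _
  have hc : c ∈ Metric.ball c r := Metric.mem_ball_self hr
  refine ⟨fun z => g₀ z - g₀ c, fun z hz => (hg z hz).differentiableAt.differentiableWithinAt,
    sub_self _, fun z hz => ?_⟩
  -- `f * exp (-g)` is constant.
  have hder : ∀ w ∈ Metric.ball c r,
      HasDerivAt (fun w => f w * exp (-(g₀ w - g₀ c))) 0 w := by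
    intro w hw
    have h1 := (hf.differentiableAt (Metric.isOpen_ball.mem_nhds hw)).hasDerivAt
    have h2 := h1.mul (hg w hw).neg.cexp
    have h3 := h0 w hw
    refine h2.congr_deriv ?_
    rw [mul_neg, mul_neg, mul_left_comm, mul_div_cancel₀ _ h3, mul_comm, add_neg_cancel]
  have hconst := Metric.isOpen_ball.is_const_of_deriv_eq_zero
    (convex_ball c r).isPreconnected (f := fun w => f w * exp (-(g₀ w - g₀ c)))
    (fun w hw => (hder w hw).differentiableAt.differentiableWithinAt)
    (fun w hw => (hder w hw).deriv) hz hc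
  simp only [sub_self, neg_zero, exp_zero, mul_one] at hconst
  rw [← hconst, mul_assoc, ← exp_add]
  simp

lemma zetaReg_ne_zero (hRH : RiemannHypothesis) {s : ℂ} (hs : 1 / 2 < s.re) : zetaReg s ≠ 0 := by
  rcases eq_or_ne s 1 with rfl | h1
  · simp [zetaReg_one]
  rw [zetaReg_eq (by linarith) h1]
  refine mul_ne_zero (sub_ne_zero.mpr h1) fun hz => ?_
  have := hRH s hz ?_ h1
  · linarith
  · rintro ⟨n, rfl⟩
    have hn : (0 : ℝ) ≤ n := n.cast_nonneg
    simp at hs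
    linarith

lemma norm_zetaReg_ge {s : ℂ} (hs : 2 ≤ s.re) : 1 / 3 * ‖s - 1‖ ≤ ‖zetaReg s‖ := by
  have h1 : s ≠ 1 := by rintro rfl; norm_num at hs
  have h2 := norm_zeta_sub_one_le hs
  have h3 : 1 / 3 ≤ ‖riemannZeta s‖ := by
    have := norm_sub_norm_le (1 : ℂ) (1 - riemannZeta s)
    rw [norm_sub_rev (1 : ℂ) (riemannZeta s), sub_sub_cancel, norm_one] at this
    linarith
  rw [zetaReg_eq (by linarith) h1, norm_mul, mul_comm]
  gcongr

lemma norm_zetaReg_le {s : ℂ} (hs : 2 ≤ s.re) : ‖zetaReg s‖ ≤ 5 / 3 * ‖s - 1‖ := by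
  have h1 : s ≠ 1 := by rintro rfl; norm_num at hs
  have h2 := norm_zeta_sub_one_le hs
  have h3 : ‖riemannZeta s‖ ≤ 5 / 3 := by
    have := norm_sub_norm_le (riemannZeta s) 1
    rw [norm_one] at this
    linarith
  rw [zetaReg_eq (by linarith) h1, norm_mul, mul_comm]
  gcongr

/-- Under RH, `(s - 1) ζ(s)` is not smaller than `exp (-A (1 + |s|))` to the right of
`1 / 2 + η`: the Borel–Carathéodory theorem bounds its logarithm on the disc with centre `s + 2`
and radius `2 + η / 2`, which stays in the zero-free half-plane and contains `s`. At the centre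
`ζ` is bounded away from zero. -/
lemma exists_le_norm_zetaReg (hRH : RiemannHypothesis) {η : ℝ} (hη0 : 0 < η) (hη1 : η ≤ 1) :
    ∃ A : ℝ, 0 ≤ A ∧ ∀ s : ℂ, 1 / 2 + η ≤ s.re →
      1 / 3 * Real.exp (-(A * (1 + ‖s‖))) ≤ ‖zetaReg s‖ := by
  obtain ⟨K, hK1, hK⟩ := exists_norm_zetaReg_le
  refine ⟨8 * (3 * K + 12) / η, by positivity, fun s hs => ?_⟩
  have hsn := norm_nonneg s
  set f : ℂ → ℂ := fun w => zetaReg (s + 2 + w) with hfdef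
  set R : ℝ := 2 + η / 2 with hR
  have hre : ∀ w ∈ Metric.ball (0 : ℂ) R, 1 / 2 < (s + 2 + w).re := by
    intro w hw
    have h1 : ‖w‖ < R := by simpa using hw
    have h2 := (abs_le.mp (abs_re_le_norm w)).1
    simp only [add_re, re_ofNat]
    linarith
  have hfd : DifferentiableOn ℂ f (Metric.ball 0 R) := by
    intro w hw
    refine DifferentiableAt.differentiableWithinAt ?_
    exact DifferentiableAt.comp w (differentiableAt_zetaReg (by linarith [hre w hw]))
      (differentiableAt_id.const_add _)
  obtain ⟨g, hgd, hg0, hg⟩ := exists_log_of_ne_zero (by positivity) hfd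
    (fun w hw => zetaReg_ne_zero hRH (hre w hw))
  have hf0 : 1 / 3 ≤ ‖f 0‖ := by
    have h2 : (2 : ℝ) ≤ (s + 2).re := by simp; linarith
    have h1 := norm_zetaReg_ge h2
    have h3 : 1 ≤ ‖s + 2 - 1‖ := by
      refine le_trans ?_ (re_le_norm _)
      simp; linarith
    simp only [hfdef, add_zero]
    linarith
  set M : ℝ := 3 * K + 2 * (6 + ‖s‖) with hM
  have hM0 : 0 < M := by positivity
  have hgM : Set.MapsTo g (Metric.ball 0 R) {z | z.re ≤ M} := by
    intro w hw
    have h1 : ‖w‖ < R := by simpa using hw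
    have hup := hK (s + 2 + w) (by linarith [hre w hw])
    have hn : ‖s + 2 + w‖ ≤ ‖s‖ + 5 := by
      refine (norm_add_le _ _).trans ?_
      have := norm_add_le s 2
      simp only [Complex.norm_ofNat] at this
      linarith
    have h2 := congrArg norm (hg w hw)
    rw [norm_mul, norm_exp] at h2
    have h3 : Real.exp (g w).re ≤ 3 * K * (6 + ‖s‖) ^ 2 := by
      have h4 : 1 / 3 * Real.exp (g w).re ≤ ‖f w‖ := by rw [h2]; gcongr
      have h5 : ‖f w‖ ≤ K * (6 + ‖s‖) ^ 2 := hup.trans (by gcongr K * ?_ ^ 2; linarith)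
      linarith
    have h6 : 3 * K * (6 + ‖s‖) ^ 2 ≤ Real.exp M := by
      have e : M = 3 * K + ((6 + ‖s‖) + (6 + ‖s‖)) := by rw [hM]; ring
      rw [e, Real.exp_add, Real.exp_add, ← sq]
      gcongr
      · linarith [Real.add_one_le_exp (3 * K)]
      · linarith [Real.add_one_le_exp (6 + ‖s‖)]
    exact Real.exp_le_exp.mp (h3.trans h6)
  have h2R : (-2 : ℂ) ∈ Metric.ball (0 : ℂ) R := by simp [hR]; positivity
  have hbc := borelCaratheodory_zero hM0 hgd hgM (by positivity) h2R hg0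
  have hn2 : ‖(-2 : ℂ)‖ = 2 := by simp
  have hgb : ‖g (-2)‖ ≤ 8 * (3 * K + 12) / η * (1 + ‖s‖) := by
    refine hbc.trans ?_
    rw [hn2, hR, hM, add_sub_cancel_left, div_mul_eq_mul_div, div_le_div_iff₀ (by positivity) hη0]
    have : (3 * K + 2 * (6 + ‖s‖)) ≤ (3 * K + 12) * (1 + ‖s‖) := by nlinarith
    nlinarith
  have h := congrArg norm (hg _ h2R)
  rw [norm_mul, norm_exp] at h
  have e : f (-2) = zetaReg s := by simp [hfdef]
  rw [← e, h]
  gcongr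
  have := (abs_le.mp ((abs_re_le_norm (g (-2))).trans hgb)).1
  linarith

/-! ### Monotonicity of `|ξ|` -/

lemma norm_le_norm_add_real {z : ℂ} {a : ℝ} (hz : 0 ≤ z.re) (ha : 0 ≤ a) : ‖z‖ ≤ ‖z + a‖ := by
  rw [← sq_le_sq₀ (norm_nonneg _) (norm_nonneg _), Complex.sq_norm, Complex.sq_norm,
    normSq_apply, normSq_apply]
  simp
  nlinarith

/-- Up to a constant, `|ξ(s - η) / ξ(s + η)|` is at most the corresponding quotient for
`(s - 1) ζ(s)`. The inequality is free of division, so that no zero needs to be excluded. -/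
lemma exists_xiFn_ratio_le {η : ℝ} (hη0 : 0 < η) (hη1 : η ≤ 1 / 8) :
    ∃ K : ℝ, 0 ≤ K ∧ ∀ s : ℂ, 1 / 2 ≤ s.re →
      ‖xiFn (s - η)‖ * ‖zetaReg (s + η)‖ ≤ K * ‖zetaReg (s - η)‖ * ‖xiFn (s + η)‖ := by
  obtain ⟨K, hK0, hK⟩ := exists_norm_Gamma_le (a := 3 / 16) (by norm_num) hη0
  refine ⟨Real.pi ^ η * K, by positivity, fun s hs => ?_⟩
  have hre1 : 3 / 8 ≤ (s - η).re := by simp; linarith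
  have hre2 : 3 / 8 ≤ (s + η).re := by simp; linarith
  rw [xiFn_eq_mul_zetaReg (s := s - η) (by linarith), xiFn_eq_mul_zetaReg (s := s + η) (by linarith)]
  have h1 : ‖s - η‖ ≤ ‖s + η‖ := by
    have := norm_le_norm_add_real (z := s - η) (a := 2 * η) (by linarith) (by linarith)
    refine this.trans (le_of_eq ?_)
    congr 1; push_cast; ring
  have h2 : ‖Gammaℝ (s - η)‖ ≤ Real.pi ^ η * K * ‖Gammaℝ (s + η)‖ := by
    have h3 := hK ((s - η) / 2) (by simp at hre1 ⊢; linarith)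
    have e : (s - η) / 2 + η = (s + η) / 2 := by ring
    rw [e] at h3
    rw [Gammaℝ_def, Gammaℝ_def, norm_mul, norm_mul, norm_cpow_eq_rpow_re_of_pos Real.pi_pos,
      norm_cpow_eq_rpow_re_of_pos Real.pi_pos]
    have e2 : (-(s - η) / 2).re = η + (-(s + η) / 2).re := by simp; ring
    rw [e2, Real.rpow_add Real.pi_pos]
    calc _ ≤ Real.pi ^ η * Real.pi ^ (-(s + η) / 2).re * (K * ‖Gamma ((s + η) / 2)‖) := by gcongr
      _ = _ := by ring
  simp only [norm_mul]
  calc _ ≤ ‖s + η‖ * (Real.pi ^ η * K * ‖Gammaℝ (s + η)‖) * ‖zetaReg (s - η)‖ * ‖zetaReg (s + η)‖ := by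
        gcongr
    _ = _ := by ring

/-- Under RH, `|ξ|` does not decrease to the right: points symmetric about a vertical line in
`1 / 2 ≤ s.re` are compared by the Phragmén–Lindelöf principle, applied to
`z ↦ ξ(z + 1/2 - η) / ξ(z + 1/2 + η)` in the right half-plane. -/
lemma norm_xiFn_sub_le_add (hRH : RiemannHypothesis) {η : ℝ} (hη0 : 0 < η) (hη1 : η ≤ 1 / 8)
    {s : ℂ} (hs : 1 / 2 ≤ s.re) : ‖xiFn (s - η)‖ ≤ ‖xiFn (s + η)‖ := by
  obtain ⟨K, hK0, hK⟩ := exists_xiFn_ratio_le hη0 hη1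
  obtain ⟨K₁, hK₁1, hK₁⟩ := exists_norm_zetaReg_le
  obtain ⟨A, hA0, hA⟩ := exists_le_norm_zetaReg hRH hη0 (by linarith)
  set f : ℂ → ℂ := fun z => xiFn (z + 1 / 2 - η) / xiFn (z + 1 / 2 + η) with hf
  have hne : ∀ z : ℂ, 0 ≤ z.re → xiFn (z + 1 / 2 + η) ≠ 0 := by
    intro z hz
    have hre : 1 / 2 < (z + 1 / 2 + η).re := by simp; linarith
    rw [xiFn_eq_mul_zetaReg (by linarith)]
    exact mul_ne_zero (mul_ne_zero (ne_zero_of_re_pos' (by linarith))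
      (Gammaℝ_ne_zero_of_re_pos (by linarith))) (zetaReg_ne_zero hRH hre)
  have hbound : ∀ z : ℂ, 0 ≤ z.re →
      ‖f z‖ ≤ K * (‖zetaReg (z + 1 / 2 - η)‖ / ‖zetaReg (z + 1 / 2 + η)‖) := by
    intro z hz
    have hre : 1 / 2 < (z + 1 / 2 + η).re := by simp; linarith
    have h1 := hK (z + 1 / 2) (by simpa using hz)
    have h2 := norm_pos_iff.mpr (hne z hz)
    have h3 := norm_pos_iff.mpr (zetaReg_ne_zero hRH hre)
    rw [hf, norm_div, ← mul_div_assoc, div_le_div_iff₀ h2 h3]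
    exact h1
  have hdiff : DiffContOnCl ℂ f {z | 0 < z.re} := by
    refine DifferentiableOn.diffContOnCl fun z hz => ?_
    rw [closure_setOfPred_lt_re] at hz
    refine DifferentiableAt.differentiableWithinAt ?_
    refine DifferentiableAt.div ?_ ?_ (hne z hz)
    · exact (differentiable_xiFn _).comp z (by fun_prop)
    · exact (differentiable_xiFn _).comp z (by fun_prop)
  have hexp : ∃ c < (2 : ℝ), ∃ B, f =O[Bornology.cobounded ℂ ⊓ Filter.principal {z | 0 < z.re}]
      fun z => Real.exp (B * ‖z‖ ^ c) := by
    refine ⟨1, by norm_num, 2 + A, Asymptotics.IsBigO.of_bound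
      (K * (K₁ * 3) * Real.exp (2 + 2 * A)) ?_⟩
    rw [Filter.eventually_inf_principal]
    refine Filter.Eventually.of_forall fun z hz => ?_
    have hz0 : 0 ≤ z.re := le_of_lt hz
    have hzn := norm_nonneg z
    rw [Real.rpow_one, Real.norm_eq_abs, Real.abs_exp]
    have hhalf : ‖(1 / 2 : ℂ)‖ = 1 / 2 := by simp
    have hηn : ‖(η : ℂ)‖ = η := by simp [abs_of_pos hη0]
    have hn0 : ‖z + 1 / 2‖ ≤ ‖z‖ + 1 / 2 := (norm_add_le _ _).trans (by rw [hhalf])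
    have hn1 : ‖z + 1 / 2 - η‖ ≤ ‖z‖ + 1 :=
      (norm_sub_le _ _).trans (by rw [hηn]; linarith)
    have hn2 : ‖z + 1 / 2 + η‖ ≤ ‖z‖ + 1 :=
      (norm_add_le _ _).trans (by rw [hηn]; linarith)
    have h1 := hK₁ (z + 1 / 2 - η) (by simp; linarith)
    have h2 := hA (z + 1 / 2 + η) (by simp; linarith)
    have h3 : ‖zetaReg (z + 1 / 2 - η)‖ ≤ K₁ * Real.exp (2 * (1 + ‖z‖)) := by
      refine h1.trans ?_
      rw [two_mul, Real.exp_add, ← sq]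
      gcongr
      linarith [Real.add_one_le_exp (1 + ‖z‖)]
    have h4 : 1 / 3 * Real.exp (-(A * (2 + ‖z‖))) ≤ ‖zetaReg (z + 1 / 2 + η)‖ := by
      refine le_trans ?_ h2
      have := mul_le_mul_of_nonneg_left
        (by linarith : 1 + ‖z + 1 / 2 + η‖ ≤ 2 + ‖z‖) hA0
      exact mul_le_mul_of_nonneg_left (Real.exp_le_exp.mpr (by linarith)) (by norm_num)
    refine (hbound z hz0).trans ?_
    calc K * (‖zetaReg (z + 1 / 2 - η)‖ / ‖zetaReg (z + 1 / 2 + η)‖)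
        ≤ K * ((K₁ * Real.exp (2 * (1 + ‖z‖))) / (1 / 3 * Real.exp (-(A * (2 + ‖z‖))))) := by gcongr
      _ = K * (K₁ * 3) * (Real.exp (2 * (1 + ‖z‖)) * Real.exp (A * (2 + ‖z‖))) := by
          rw [Real.exp_neg]; field_simp
      _ = K * (K₁ * 3) * Real.exp (2 + 2 * A) * Real.exp ((2 + A) * ‖z‖) := by
          rw [mul_assoc _ (Real.exp _) (Real.exp _), ← Real.exp_add, ← Real.exp_add]
          ring_nf
  have hreal : Filter.IsBoundedUnder (· ≤ ·) Filter.atTop fun x : ℝ => ‖f x‖ := by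
    refine Filter.isBoundedUnder_of_eventually_le (a := K * 5) ?_
    filter_upwards [Filter.eventually_ge_atTop 2] with x hx
    refine (hbound x (by simp; linarith)).trans ?_
    have hr1 : 2 ≤ ((x : ℂ) + 1 / 2 - η).re := by simp; linarith
    have hr2 : 2 ≤ ((x : ℂ) + 1 / 2 + η).re := by simp; linarith
    have h1 := norm_zetaReg_le hr1
    have h2 := norm_zetaReg_ge hr2
    have h3 : ‖(x : ℂ) + 1 / 2 - η - 1‖ ≤ ‖(x : ℂ) + 1 / 2 + η - 1‖ := by
      have := norm_le_norm_add_real (z := (x : ℂ) + 1 / 2 - η - 1) (a := 2 * η)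
        (by simp at hr1 ⊢; linarith) (by linarith)
      refine this.trans (le_of_eq ?_)
      congr 1; push_cast; ring
    have h4 := norm_pos_iff.mpr (zetaReg_ne_zero hRH (s := (x : ℂ) + 1 / 2 + η) (by linarith))
    gcongr
    rw [div_le_iff₀ h4]
    linarith
  -- On the critical line the two arguments are exchanged by `s ↦ 1 - conj s`, which preserves
  -- the modulus of `ξ`.
  have him : ∀ x : ℝ, ‖f (x * I)‖ ≤ 1 := by
    intro x
    have h := norm_xiFn_conj (s := x * I + 1 / 2 + η) (by simp; linarith)
    rw [← xiFn_one_sub] at h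
    have e : 1 - (starRingEnd ℂ) (x * I + 1 / 2 + η) = x * I + 1 / 2 - η := by
      apply Complex.ext
      · simp; ring
      · simp
    rw [e] at h
    rw [hf, norm_div, h]
    exact div_self_le_one _
  have hz : (0 : ℝ) ≤ (s - 1 / 2).re := by simpa using hs
  have key := PhragmenLindelof.right_half_plane_of_bounded_on_real hdiff hexp hreal him hz
  rw [hf, norm_div, div_le_one (norm_pos_iff.mpr (hne _ hz)), sub_add_cancel] at key
  exact key

/-! ### Comparison of `ζ` at two points -/

/-- The archimedean factor is responsible for the main term `(1/2) log τ`. -/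
lemma norm_Gammaℝ_le {σ σ' t : ℝ} (h0 : 1 / 2 ≤ σ) (h1 : σ ≤ σ') (h2 : σ' ≤ 3 / 4) :
    ‖Gammaℝ (σ' + t * I)‖ ≤
      Real.exp ((σ' - σ) * (1 / 2 * Real.log (|t| + 3) + 5 / 4)) * ‖Gammaℝ (σ + t * I)‖ := by
  have hg := norm_Gamma_add_le (z := (σ + t * I) / 2) (δ := (σ' - σ) / 2)
    (by simp; linarith) (by simp; linarith) (by linarith) (by linarith)
  have e : (σ + t * I : ℂ) / 2 + ((σ' - σ) / 2 : ℝ) = (σ' + t * I) / 2 := by push_cast; ring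
  have him : ((σ + t * I : ℂ) / 2).im = t / 2 := by simp
  rw [e, him] at hg
  have hlog : Real.log (4 + (t / 2) ^ 2) ≤ 2 * Real.log (|t| + 3) := by
    have e2 : 2 * Real.log (|t| + 3) = Real.log ((|t| + 3) ^ 2) := by
      rw [Real.log_pow]; norm_num
    rw [e2]
    apply Real.log_le_log (by positivity)
    nlinarith [sq_abs t, abs_nonneg t]
  rw [Gammaℝ_def, Gammaℝ_def, norm_mul, norm_mul, norm_cpow_eq_rpow_re_of_pos Real.pi_pos,
    norm_cpow_eq_rpow_re_of_pos Real.pi_pos]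
  calc _ ≤ Real.pi ^ (-(σ + t * I : ℂ) / 2).re *
        (Real.exp ((σ' - σ) * (1 / 2 * Real.log (|t| + 3) + 5 / 4)) *
          ‖Gamma ((σ + t * I) / 2)‖) := by
        refine mul_le_mul (Real.rpow_le_rpow_of_exponent_le (by linarith [Real.pi_gt_three])
          (by simp; linarith)) (hg.trans (mul_le_mul_of_nonneg_right (Real.exp_le_exp.mpr ?_)
          (norm_nonneg _))) (norm_nonneg _) (by positivity)
        nlinarith [mul_le_mul_of_nonneg_left hlog (sub_nonneg.mpr h1)]
    _ = _ := by ring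

/-- Assuming RH: with `τ = |t| + 3`, `2 ≤ x ≤ τ²`, `λ₀ ≤ λ ≤ (log x)/4`
(where `λ₀` is the unique positive real with `e^{-λ₀} = λ₀`) and
`σ_λ = 1/2 + λ/log x`, provided `σ' + it` is neither `1` nor a zero of `ζ`
for all `σ'` in the relevant range, the inequality
`log|ζ(σ+it)| − log|ζ(σ_λ+it)| ≤ (σ_λ − 1/2)((1/2) log τ + O(1))`
holds uniformly for `1/2 ≤ σ ≤ σ_λ`. -/
theorem log_zeta_diff_upper_bound (hRH : RiemannHypothesis)
    (lam0 : ℝ) (hlam0_pos : 0 < lam0) (hlam0 : Real.exp (-lam0) = lam0) :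
    ∃ C : ℝ, ∀ t x lam σ : ℝ,
      2 ≤ x → x ≤ (|t| + 3) ^ 2 →
      lam0 ≤ lam → lam ≤ Real.log x / 4 →
      1 / 2 ≤ σ → σ ≤ 1 / 2 + lam / Real.log x →
      (∀ σ' ∈ Set.Icc σ (1 / 2 + lam / Real.log x),
        (σ' + t * I : ℂ) ≠ 1 ∧ riemannZeta (σ' + t * I) ≠ 0) →
      Real.log ‖riemannZeta (σ + t * I)‖ -
        Real.log ‖riemannZeta ((1 / 2 + lam / Real.log x : ℝ) + t * I)‖ ≤
        (1 / 2 + lam / Real.log x - 1 / 2) * (1 / 2 * Real.log (|t| + 3) + C) := by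
  -- `13 / 4 = 5 / 4 + 2`: `5 / 4` is lost in the archimedean factor, `2` in the factor `s`.
  refine ⟨13 / 4, fun t x lam σ hx _ _ hlam hσ hσ' hz => ?_⟩
  have hlogx : 0 < Real.log x := Real.log_pos (by linarith)
  have hq : lam / Real.log x ≤ 1 / 4 := by
    rw [div_le_iff₀ hlogx]; linarith
  set σ' : ℝ := 1 / 2 + lam / Real.log x with hσ'def
  have hσ'4 : σ' ≤ 3 / 4 := by linarith
  have hlogτ : 0 ≤ Real.log (|t| + 3) := Real.log_nonneg (by linarith [abs_nonneg t])
  have hrhs : (σ' - σ) * (1 / 2 * Real.log (|t| + 3) + 13 / 4) ≤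
      (σ' - 1 / 2) * (1 / 2 * Real.log (|t| + 3) + 13 / 4) := by gcongr
  refine le_trans ?_ hrhs
  rcases hσ'.eq_or_lt with heq | hlt
  · simp [← heq]
  obtain ⟨ha1, ha2⟩ := hz σ ⟨le_rfl, hσ'⟩
  obtain ⟨hb1, hb2⟩ := hz σ' ⟨hσ', le_rfl⟩
  -- `|ξ|` is compared at the two points, symmetric about the line through their midpoint.
  have hxi : ‖xiFn (σ + t * I)‖ ≤ ‖xiFn (σ' + t * I)‖ := by
    have h := norm_xiFn_sub_le_add hRH (η := (σ' - σ) / 2) (by linarith) (by linarith)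
      (s := ((σ + σ') / 2 : ℝ) + t * I) (by simp; linarith)
    have e1 : (((σ + σ') / 2 : ℝ) + t * I - ((σ' - σ) / 2 : ℝ) : ℂ) = σ + t * I := by
      push_cast; ring
    have e2 : (((σ + σ') / 2 : ℝ) + t * I + ((σ' - σ) / 2 : ℝ) : ℂ) = σ' + t * I := by
      push_cast; ring
    rwa [e1, e2] at h
  have hra : 1 / 2 ≤ (σ + t * I : ℂ).re := by simpa using hσ
  have hrb : 1 / 2 ≤ (σ' + t * I : ℂ).re := by simp; linarith
  rw [xiFn_eq_mul_zetaReg (by linarith), xiFn_eq_mul_zetaReg (s := σ' + t * I) (by linarith),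
    zetaReg_eq (by linarith) ha1, zetaReg_eq (by linarith) hb1] at hxi
  simp only [norm_mul] at hxi
  have hsa : 1 / 2 ≤ ‖(σ + t * I : ℂ)‖ := hra.trans (re_le_norm _)
  have h1 : ‖(σ' + t * I : ℂ)‖ ≤ Real.exp (2 * (σ' - σ)) * ‖(σ + t * I : ℂ)‖ := by
    have e : (σ' + t * I : ℂ) = (σ + t * I) + ((σ' - σ : ℝ) : ℂ) := by push_cast; ring
    have h := norm_add_le (σ + t * I : ℂ) ((σ' - σ : ℝ) : ℂ)
    rw [← e, norm_real, Real.norm_eq_abs, abs_of_pos (by linarith)] at h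
    have h2 := Real.add_one_le_exp (2 * (σ' - σ))
    nlinarith
  have h2 : ‖(σ' + t * I - 1 : ℂ)‖ ≤ ‖(σ + t * I - 1 : ℂ)‖ := by
    rw [← sq_le_sq₀ (norm_nonneg _) (norm_nonneg _), Complex.sq_norm, Complex.sq_norm,
      normSq_apply, normSq_apply]
    simp
    nlinarith
  have h3 := norm_Gammaℝ_le (t := t) hσ hσ' hσ'4
  have hza := norm_pos_iff.mpr ha2
  have hzb := norm_pos_iff.mpr hb2
  have hpa : 0 < ‖(σ + t * I : ℂ)‖ * ‖Gammaℝ (σ + t * I)‖ * ‖(σ + t * I - 1 : ℂ)‖ :=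
    mul_pos (mul_pos (by linarith)
      (norm_pos_iff.mpr (Gammaℝ_ne_zero_of_re_pos (by linarith))))
      (norm_pos_iff.mpr (sub_ne_zero.mpr ha1))
  have hmain : ‖riemannZeta (σ + t * I)‖ ≤
      Real.exp ((σ' - σ) * (1 / 2 * Real.log (|t| + 3) + 13 / 4)) *
        ‖riemannZeta (σ' + t * I)‖ := by
    refine le_of_mul_le_mul_left ?_ hpa
    have e : Real.exp ((σ' - σ) * (1 / 2 * Real.log (|t| + 3) + 13 / 4)) =
        Real.exp (2 * (σ' - σ)) *
          Real.exp ((σ' - σ) * (1 / 2 * Real.log (|t| + 3) + 5 / 4)) := by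
      rw [← Real.exp_add]; ring_nf
    rw [e]
    calc _ = ‖(σ + t * I : ℂ)‖ * ‖Gammaℝ (σ + t * I)‖ *
          (‖(σ + t * I - 1 : ℂ)‖ * ‖riemannZeta (σ + t * I)‖) := by ring
      _ ≤ _ := hxi
      _ ≤ (Real.exp (2 * (σ' - σ)) * ‖(σ + t * I : ℂ)‖) *
          (Real.exp ((σ' - σ) * (1 / 2 * Real.log (|t| + 3) + 5 / 4)) * ‖Gammaℝ (σ + t * I)‖) *
          (‖(σ + t * I - 1 : ℂ)‖ * ‖riemannZeta (σ' + t * I)‖) := by gcongr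
      _ = _ := by ring
  have := Real.log_le_log hza hmain
  rw [Real.log_mul (Real.exp_pos _).ne' hzb.ne', Real.log_exp] at this
  linarith
end
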